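/- Let β ∈ {0,1}, d ≥ 1, λ ∈ 2^ℤ, and for t > 0 and x ∈ ℝ^d define the oscillatory integral I_λ(x, t) = λ^d ∫_{ℝ^d} e^{i λ x·ξ + i t m_β(λ|ξ|)} ρ(|ξ|) dξ. Then sup_{x ∈ ℝ^d} |I_λ(x, t)| ≲ c_{β,d}(λ) t^{-d/2} for all t > 0, where c_{β,d}(λ) = λ^{d/2-1} ⟨√β λ⟩^{-d/2} ⟨λ⟩^{d/4+1} and the implicit constant is independent of λ, x and t. -/

import Mathlib

noncomputable section

open MeasureTheory Complex Real
open scoped FourierTransform ENNReal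

/-- Euclidean space `ℝ^d`. -/
abbrev Euc (d : ℕ) := EuclideanSpace ℝ (Fin d)

/-- Japanese bracket `⟨x⟩ = (1+|x|²)^{1/2}`. -/
def jap (x : ℝ) : ℝ := Real.sqrt (1 + x ^ 2)

/-- The symbol `m_β(r) = √(r(1+βr²)tanh r)`. -/
def mSymb (β r : ℝ) : ℝ := Real.sqrt (r * (1 + β * r ^ 2) * Real.tanh r)

/-- The constant `c_{β,d}(λ) = λ^{d/2-1}⟨√β λ⟩^{-d/2}⟨λ⟩^{d/4+1}`. -/
def cFactor (β : ℝ) (d : ℕ) (lam : ℝ) : ℝ :=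
  lam ^ ((d : ℝ) / 2 - 1) * jap (Real.sqrt β * lam) ^ (-(d : ℝ) / 2) *
    jap lam ^ ((d : ℝ) / 4 + 1)

/-- `χ ∈ C_0^∞(ℝ)`, `0 ≤ χ ≤ 1`, `χ ≡ 1` on `[-1,1]`, `supp χ ⊆ [-2,2]`. -/
def IsCutoff (χ : ℝ → ℝ) : Prop :=
  ContDiff ℝ (⊤ : ℕ∞) χ ∧ HasCompactSupport χ ∧ (∀ s, 0 ≤ χ s ∧ χ s ≤ 1) ∧
    (∀ s ∈ Set.Icc (-1 : ℝ) 1, χ s = 1) ∧ Function.support χ ⊆ Set.Icc (-2 : ℝ) 2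

/-- `ρ(s) = χ(s) - χ(2s)`. -/
def rho (χ : ℝ → ℝ) (s : ℝ) : ℝ := χ s - χ (2 * s)

/-- Fourier multiplier operator with symbol `m`. -/
def mulOp {d : ℕ} (m : Euc d → ℂ) (f : Euc d → ℂ) : Euc d → ℂ :=
  𝓕⁻ fun ξ => m ξ * 𝓕 f ξ

/-- The Littlewood–Paley type projection `P_λ` with multiplier `ρ(|ξ|/λ)`. -/
def proj {d : ℕ} (χ : ℝ → ℝ) (lam : ℝ) (f : Euc d → ℂ) : Euc d → ℂ :=
  mulOp (fun ξ => (rho χ (‖ξ‖ / lam) : ℂ)) f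

/-- The propagator `S_{m_β}(t) = exp(-it m_β(D))`, so that `S_{m_β}(±t) = prop β (±t)`. -/
def propg (β : ℝ) {d : ℕ} (t : ℝ) (f : Euc d → ℂ) : Euc d → ℂ :=
  mulOp (fun ξ => Complex.exp (-Complex.I * (t * mSymb β ‖ξ‖))) f

open scoped RealInnerProductSpace

/-!
In polar coordinates the kernel becomes a sum of two one-dimensional oscillatory integrals with
phases `t m_β(λr) ± λ|x|r`, whose amplitudes have size `(λ|x|r)^{-(d-1)/2}` with an `r`-derivative
of the same size. The rescaled phases `m_β(λr)` are `A_λ G(p, r)`, where `p = λ` for `λ ≤ 1` and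
`p = 1/λ` for `λ ≥ 1`, and `G` is smooth up to `p = 0`, so constants are uniform in `λ` by
compactness. Let `T = t A_λ`. If `λ|x|` is small compared with `T`, then the phase has no
stationary point, because `m_β' > 0`, and repeated integration by parts gives `T^{-d}`. Otherwise
the decay of the amplitude gives `T^{-(d-1)/2}`, and van der Corput's second derivative test the
missing `T^{-1/2}`, because `m_0` is strictly concave and `m_1` strictly convex. For `λ ≤ 1` the
curvature is only of relative size `λ²`, which costs the extra factor `1/λ`.
-/

/-! ### Oscillatory integrals on an interval -/

/-- The unimodular phase factor `e^{iy}` of all oscillatory integrals below. -/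
def expI (y : ℝ) : ℂ := Complex.exp (Complex.I * y)

theorem norm_expI (y : ℝ) : ‖expI y‖ = 1 := by
  rw [expI, mul_comm, Complex.norm_exp_ofReal_mul_I]

theorem expI_zero : expI 0 = 1 := by
  simp [expI]

theorem expI_add (x y : ℝ) : expI (x + y) = expI x * expI y := by
  rw [expI, Complex.ofReal_add, mul_add, Complex.exp_add, expI, expI]

@[fun_prop]
theorem contDiff_expI {n : WithTop ℕ∞} : ContDiff ℝ n expI :=
  (contDiff_const.mul Complex.ofRealCLM.contDiff).cexp

@[fun_prop]
theorem continuous_expI : Continuous expI :=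
  (contDiff_expI (n := 0)).continuous

theorem hasDerivAt_expI_comp {φ : ℝ → ℝ} {φ' r : ℝ} (h : HasDerivAt φ φ' r) :
    HasDerivAt (fun r => expI (φ r)) (expI (φ r) * (Complex.I * φ')) r :=
  (h.ofReal_comp.const_mul Complex.I).cexp

section IntegrationByParts

variable {φ φ' : ℝ → ℝ} {B B' : ℝ → ℂ} {a b : ℝ}

theorem integral_expI_mul_deriv_mul (hφ : ∀ r ∈ Set.uIcc a b, HasDerivAt φ (φ' r) r)
    (hφ' : ContinuousOn φ' (Set.uIcc a b)) (hB : ∀ r ∈ Set.uIcc a b, HasDerivAt B (B' r) r)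
    (hB' : ContinuousOn B' (Set.uIcc a b)) :
    ∫ r in a..b, expI (φ r) * (φ' r * B r) =
      Complex.I * (expI (φ a) * B a - expI (φ b) * B b + ∫ r in a..b, expI (φ r) * B' r) := by
  have hφc : ContinuousOn φ (Set.uIcc a b) := HasDerivAt.continuousOn hφ
  have hparts := intervalIntegral.integral_mul_deriv_eq_deriv_mul hB
    (fun r hr => hasDerivAt_expI_comp (hφ r hr)) hB'.intervalIntegrable
    (ContinuousOn.intervalIntegrable (by fun_prop))
  calc ∫ r in a..b, expI (φ r) * (φ' r * B r)
      = -Complex.I * ∫ r in a..b, B r * (expI (φ r) * (Complex.I * φ' r)) := by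
        rw [← intervalIntegral.integral_const_mul]
        congr with r
        linear_combination (expI (φ r) * φ' r * B r) * Complex.I_sq
    _ = _ := by
        rw [hparts]
        simp only [mul_comm]
        ring

theorem norm_integral_expI_mul_deriv_mul_le (hab : a ≤ b)
    (hφ : ∀ r ∈ Set.Icc a b, HasDerivAt φ (φ' r) r) (hφ' : ContinuousOn φ' (Set.Icc a b))
    (hB : ∀ r ∈ Set.Icc a b, HasDerivAt B (B' r) r) (hB' : ContinuousOn B' (Set.Icc a b)) :
    ‖∫ r in a..b, expI (φ r) * (φ' r * B r)‖ ≤ ‖B a‖ + ‖B b‖ + ∫ r in a..b, ‖B' r‖ := by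
  rw [← Set.uIcc_of_le hab] at hφ hφ' hB hB'
  rw [integral_expI_mul_deriv_mul hφ hφ' hB hB', norm_mul, Complex.norm_I, one_mul]
  refine norm_add_le_of_le (norm_sub_le_of_le ?_ ?_)
    ((intervalIntegral.norm_integral_le_integral_norm hab).trans ?_) <;>
  simp only [norm_mul, norm_expI, one_mul, le_refl]

end IntegrationByParts

theorem integral_norm_le_of_norm_le_const {f : ℝ → ℂ} {a b M : ℝ} (hab : a ≤ b)
    (hf : ContinuousOn f (Set.Icc a b)) (hM : ∀ r ∈ Set.Icc a b, ‖f r‖ ≤ M) :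
    ∫ r in a..b, ‖f r‖ ≤ M * (b - a) := by
  have := intervalIntegral.integral_mono_on hab (μ := volume)
    (hf.norm.intervalIntegrable_of_Icc hab) intervalIntegrable_const hM
  rwa [intervalIntegral.integral_const, smul_eq_mul, mul_comm] at this

theorem abs_div_sq_add_le {μ : ℝ} (hμ : 0 < μ) (y : ℝ) : |y / (y ^ 2 + μ)| ≤ 1 / (2 * √μ) := by
  have hsqrt : √μ ^ 2 = μ := Real.sq_sqrt hμ.le
  rw [abs_div, abs_of_pos (by positivity : 0 < y ^ 2 + μ),
    div_le_div_iff₀ (by positivity) (by positivity)]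
  nlinarith [sq_nonneg (|y| - √μ), sq_abs y]

theorem hasDerivAt_div_sq_add {f : ℝ → ℝ} {f' r μ : ℝ} (hμ : 0 < μ) (hf : HasDerivAt f f' r) :
    HasDerivAt (fun r => f r / (f r ^ 2 + μ)) (f' * (μ - f r ^ 2) / (f r ^ 2 + μ) ^ 2) r := by
  have hne : f r ^ 2 + μ ≠ 0 := by positivity
  refine (hf.div ((hf.pow 2).add_const μ) hne).congr_deriv ?_
  simp only [Pi.pow_apply]
  ring

theorem abs_mul_sub_sq_div_le {μ : ℝ} (hμ : 0 < μ) (x y : ℝ) :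
    |x * (μ - y ^ 2) / (y ^ 2 + μ) ^ 2| ≤ |x| / (y ^ 2 + μ) := by
  have hsub : |μ - y ^ 2| ≤ y ^ 2 + μ := by
    rw [abs_le]
    constructor <;> nlinarith [sq_nonneg y]
  rw [abs_div, abs_mul, abs_of_pos (by positivity : 0 < (y ^ 2 + μ) ^ 2),
    div_le_div_iff₀ (by positivity) (by positivity), sq (y ^ 2 + μ), ← mul_assoc]
  gcongr

section VanDerCorput

variable {φ φ' φ'' q q' w : ℝ → ℝ} {A A' : ℝ → ℂ} {a b m μ : ℝ}

theorem norm_integral_expI_mul_le_of_multiplier (hab : a ≤ b)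
    (hφ : ∀ r ∈ Set.Icc a b, HasDerivAt φ (φ' r) r) (hφ' : ContinuousOn φ' (Set.Icc a b))
    (hq : ∀ r ∈ Set.Icc a b, HasDerivAt q (q' r) r) (hq' : ContinuousOn q' (Set.Icc a b))
    (hqm : ∀ r ∈ Set.Icc a b, |q r| ≤ m) (hw : ContinuousOn w (Set.Icc a b))
    (hqw : ∀ r ∈ Set.Icc a b, |q' r| + |1 - φ' r * q r| ≤ w r)
    (hA : ∀ r ∈ Set.Icc a b, HasDerivAt A (A' r) r) (hA' : ContinuousOn A' (Set.Icc a b)) :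
    ‖∫ r in a..b, expI (φ r) * A r‖ ≤
      m * (‖A a‖ + ‖A b‖) + (∫ r in a..b, w r * ‖A r‖) + m * ∫ r in a..b, ‖A' r‖ := by
  have hφc : ContinuousOn φ (Set.Icc a b) := HasDerivAt.continuousOn hφ
  have hqc : ContinuousOn q (Set.Icc a b) := HasDerivAt.continuousOn hq
  have hAc : ContinuousOn A (Set.Icc a b) := HasDerivAt.continuousOn hA
  have hint {E : Type} [NormedAddCommGroup E] {f : ℝ → E} (hf : ContinuousOn f (Set.Icc a b)) :
      IntervalIntegrable f volume a b := hf.intervalIntegrable_of_Icc hab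
  have hsplit : ∫ r in a..b, expI (φ r) * A r =
      (∫ r in a..b, expI (φ r) * (φ' r * (q r * A r))) +
        ∫ r in a..b, expI (φ r) * ((1 - φ' r * q r : ℝ) * A r) := by
    rw [← intervalIntegral.integral_add (hint (by fun_prop)) (hint (by fun_prop))]
    congr with r
    push_cast
    ring
  have hparts := norm_integral_expI_mul_deriv_mul_le (B := fun r => q r * A r) hab hφ hφ'
    (fun r hr => (hq r hr).ofReal_comp.mul (hA r hr)) (by fun_prop)
  have hrest : ‖∫ r in a..b, expI (φ r) * ((1 - φ' r * q r : ℝ) * A r)‖ ≤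
      ∫ r in a..b, |1 - φ' r * q r| * ‖A r‖ :=
    (intervalIntegral.norm_integral_le_integral_norm hab).trans_eq <| by
      simp only [norm_mul, norm_expI, one_mul, Complex.norm_real, Real.norm_eq_abs]
  have hmono : ∫ r in a..b, (‖(q' r : ℂ) * A r + q r * A' r‖ + |1 - φ' r * q r| * ‖A r‖) ≤
      ∫ r in a..b, (w r * ‖A r‖ + m * ‖A' r‖) := by
    refine intervalIntegral.integral_mono_on hab (hint (by fun_prop)) (hint (by fun_prop))
      fun r hr => ?_
    have hnorm := norm_add_le ((q' r : ℂ) * A r) (q r * A' r)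
    simp only [norm_mul, Complex.norm_real, Real.norm_eq_abs] at hnorm
    linarith [mul_le_mul_of_nonneg_right (hqw r hr) (norm_nonneg (A r)),
      mul_le_mul_of_nonneg_right (hqm r hr) (norm_nonneg (A' r))]
  rw [intervalIntegral.integral_add (hint (by fun_prop)) (hint (by fun_prop)),
    intervalIntegral.integral_add (hint (by fun_prop)) (hint (by fun_prop)),
    intervalIntegral.integral_const_mul] at hmono
  rw [hsplit]
  refine (norm_add_le_of_le hparts hrest).trans ?_
  simp only [norm_mul, Complex.norm_real, Real.norm_eq_abs]
  linarith [mul_le_mul_of_nonneg_right (hqm a ⟨le_rfl, hab⟩) (norm_nonneg (A a)),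
    mul_le_mul_of_nonneg_right (hqm b ⟨hab, le_rfl⟩) (norm_nonneg (A b))]

/- With the regularised multiplier `φ' / (φ' ² + μ)` in place of `1 / φ'`, no case distinction
according to the size of `φ'` is needed. -/
theorem norm_integral_expI_mul_le (hab : a ≤ b) (hμ : 0 < μ)
    (hφ : ∀ r ∈ Set.Icc a b, HasDerivAt φ (φ' r) r)
    (hφ' : ∀ r ∈ Set.Icc a b, HasDerivAt φ' (φ'' r) r) (hφ'' : ContinuousOn φ'' (Set.Icc a b))
    (hA : ∀ r ∈ Set.Icc a b, HasDerivAt A (A' r) r) (hA' : ContinuousOn A' (Set.Icc a b)) :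
    ‖∫ r in a..b, expI (φ r) * A r‖ ≤
      1 / (2 * √μ) * (‖A a‖ + ‖A b‖) +
        (∫ r in a..b, (μ + |φ'' r|) / (φ' r ^ 2 + μ) * ‖A r‖) +
        1 / (2 * √μ) * ∫ r in a..b, ‖A' r‖ := by
  have hφ'c : ContinuousOn φ' (Set.Icc a b) := HasDerivAt.continuousOn hφ'
  have hne (r : ℝ) : φ' r ^ 2 + μ ≠ 0 := by positivity
  refine norm_integral_expI_mul_le_of_multiplier hab hφ hφ'c
    (fun r hr => hasDerivAt_div_sq_add hμ (hφ' r hr)) (by fun_prop (disch := simp [hne]))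
    (fun r _ => abs_div_sq_add_le hμ _) (by fun_prop (disch := simp [hne])) (fun r _ => ?_) hA hA'
  have hrest : 1 - φ' r * (φ' r / (φ' r ^ 2 + μ)) = μ / (φ' r ^ 2 + μ) := by
    field_simp [hne r]
    ring
  rw [hrest, abs_of_pos (by positivity : 0 < μ / (φ' r ^ 2 + μ)), add_div, add_comm]
  gcongr
  exact abs_mul_sub_sq_div_le hμ _ _

theorem integral_deriv_div_sq_add (hμ : 0 < μ) (hφ' : ∀ r ∈ Set.uIcc a b, HasDerivAt φ' (φ'' r) r)
    (hφ'' : ContinuousOn φ'' (Set.uIcc a b)) :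
    ∫ r in a..b, φ'' r / (φ' r ^ 2 + μ) =
      (Real.arctan (φ' b / √μ) - Real.arctan (φ' a / √μ)) / √μ := by
  have hφ'c : ContinuousOn φ' (Set.uIcc a b) := HasDerivAt.continuousOn hφ'
  have hne (r : ℝ) : φ' r ^ 2 + μ ≠ 0 := by positivity
  have hsqrt : √μ ^ 2 = μ := Real.sq_sqrt hμ.le
  rw [sub_div]
  refine intervalIntegral.integral_eq_sub_of_hasDerivAt
    (f := fun r => Real.arctan (φ' r / √μ) / √μ) (fun r hr => ?_)
    (ContinuousOn.intervalIntegrable (by fun_prop (disch := simp [hne])))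
  refine (((hφ' r hr).div_const √μ).arctan.div_const √μ).congr_deriv ?_
  have hsq : 1 + (φ' r / √μ) ^ 2 = (φ' r ^ 2 + μ) / μ := by
    rw [div_pow, hsqrt]
    field_simp
    ring
  rw [hsq]
  field_simp [hne r]
  rw [hsqrt, mul_comm]

theorem abs_integral_deriv_div_sq_add_le (hμ : 0 < μ)
    (hφ' : ∀ r ∈ Set.uIcc a b, HasDerivAt φ' (φ'' r) r)
    (hφ'' : ContinuousOn φ'' (Set.uIcc a b)) :
    |∫ r in a..b, φ'' r / (φ' r ^ 2 + μ)| ≤ π / √μ := by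
  rw [integral_deriv_div_sq_add hμ hφ' hφ'', abs_div, abs_of_pos (Real.sqrt_pos.2 hμ)]
  gcongr
  rw [abs_le]
  constructor <;>
  linarith [Real.arctan_lt_pi_div_two (φ' b / √μ), Real.arctan_lt_pi_div_two (φ' a / √μ),
    Real.neg_pi_div_two_lt_arctan (φ' b / √μ), Real.neg_pi_div_two_lt_arctan (φ' a / √μ)]

theorem norm_integral_expI_mul_le_of_le_deriv2 {ε M M' : ℝ} (hab : a ≤ b) (hμ : 0 < μ)
    (hε : |ε| = 1) (hφ : ∀ r ∈ Set.Icc a b, HasDerivAt φ (φ' r) r)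
    (hφ' : ∀ r ∈ Set.Icc a b, HasDerivAt φ' (φ'' r) r) (hφ'' : ContinuousOn φ'' (Set.Icc a b))
    (hlow : ∀ r ∈ Set.Icc a b, μ ≤ ε * φ'' r)
    (hA : ∀ r ∈ Set.Icc a b, HasDerivAt A (A' r) r) (hA' : ContinuousOn A' (Set.Icc a b))
    (hAM : ∀ r ∈ Set.Icc a b, ‖A r‖ ≤ M) (hAM' : ∀ r ∈ Set.Icc a b, ‖A' r‖ ≤ M') :
    ‖∫ r in a..b, expI (φ r) * A r‖ ≤ (M * (1 + 2 * π) + M' * (b - a) / 2) / √μ := by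
  have hM : 0 ≤ M := (norm_nonneg _).trans (hAM a ⟨le_rfl, hab⟩)
  have hφ'c : ContinuousOn φ' (Set.Icc a b) := HasDerivAt.continuousOn hφ'
  have hAc : ContinuousOn A (Set.Icc a b) := HasDerivAt.continuousOn hA
  have hne (r : ℝ) : φ' r ^ 2 + μ ≠ 0 := by positivity
  have habs : ∀ r ∈ Set.Icc a b, |φ'' r| = ε * φ'' r := fun r hr => by
    rw [← abs_of_pos (hμ.trans_le (hlow r hr)), abs_mul, hε, one_mul]
  have hmain : ∫ r in a..b, (μ + |φ'' r|) / (φ' r ^ 2 + μ) * ‖A r‖ ≤ 2 * M * (π / √μ) := by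
    calc ∫ r in a..b, (μ + |φ'' r|) / (φ' r ^ 2 + μ) * ‖A r‖
        ≤ ∫ r in a..b, 2 * M * ε * (φ'' r / (φ' r ^ 2 + μ)) := by
          refine intervalIntegral.integral_mono_on hab
            (ContinuousOn.intervalIntegrable_of_Icc hab (by fun_prop (disch := simp [hne])))
            (ContinuousOn.intervalIntegrable_of_Icc hab (by fun_prop (disch := simp [hne])))
            fun r hr => ?_
          rw [habs r hr, show 2 * M * ε * (φ'' r / (φ' r ^ 2 + μ)) =
            (ε * φ'' r + ε * φ'' r) / (φ' r ^ 2 + μ) * M by ring]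
          have := hμ.trans_le (hlow r hr)
          gcongr
          exacts [hlow r hr, hAM r hr]
      _ ≤ 2 * M * (π / √μ) := by
          rw [← Set.uIcc_of_le hab] at hφ' hφ''
          rw [intervalIntegral.integral_const_mul, mul_assoc]
          gcongr
          refine (le_abs_self _).trans ?_
          rw [abs_mul, hε, one_mul]
          exact abs_integral_deriv_div_sq_add_le hμ hφ' hφ''
  calc ‖∫ r in a..b, expI (φ r) * A r‖
      ≤ 1 / (2 * √μ) * (M + M) + 2 * M * (π / √μ) + 1 / (2 * √μ) * (M' * (b - a)) := by
        refine (norm_integral_expI_mul_le hab hμ hφ hφ' hφ'' hA hA').trans ?_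
        gcongr
        exacts [hAM a ⟨le_rfl, hab⟩, hAM b ⟨hab, le_rfl⟩,
          integral_norm_le_of_norm_le_const hab hA' hAM']
    _ = (M * (1 + 2 * π) + M' * (b - a) / 2) / √μ := by
        field_simp
        ring

end VanDerCorput

/-! ### Zonal oscillatory integrals -/

theorem inv_one_add_mul_sin_sq_le {A θ : ℝ} (hA : 0 ≤ A) (h0 : 0 ≤ θ) (hθ : θ ≤ π / 2) :
    (1 + A * Real.sin θ ^ 2)⁻¹ ≤ (1 + (√A * (2 / π) * θ) ^ 2)⁻¹ := by
  have hjordan : 2 / π * θ ≤ Real.sin θ := Real.mul_le_sin h0 hθ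
  refine inv_anti₀ (by positivity) ?_
  rw [mul_assoc, mul_pow √A, Real.sq_sqrt hA]
  gcongr

theorem integral_inv_one_add_mul_sin_sq_le {A : ℝ} (hA : 0 < A) :
    ∫ θ in (0 : ℝ)..π, (1 + A * Real.sin θ ^ 2)⁻¹ ≤ π ^ 2 / (2 * √A) := by
  set w : ℝ → ℝ := fun θ => (1 + (√A * (2 / π) * θ) ^ 2)⁻¹ with hw
  have hw0 (θ : ℝ) : 0 ≤ w θ := by positivity
  have hwc : Continuous w := Continuous.inv₀ (by fun_prop) fun θ => by positivity
  have hint : IntervalIntegrable w volume 0 π := hwc.intervalIntegrable _ _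
  have hint' : IntervalIntegrable (fun θ => w (π - θ)) volume 0 π :=
    (hwc.comp (by fun_prop)).intervalIntegrable _ _
  have hpt : ∀ θ ∈ Set.Icc 0 π, (1 + A * Real.sin θ ^ 2)⁻¹ ≤ w θ + w (π - θ) := by
    intro θ hθ
    rcases le_total θ (π / 2) with h | h
    · linarith [hw0 (π - θ), inv_one_add_mul_sin_sq_le hA.le hθ.1 h]
    · have := inv_one_add_mul_sin_sq_le (θ := π - θ) hA.le (by linarith [hθ.2]) (by linarith)
      rw [Real.sin_pi_sub] at this
      linarith [hw0 θ]
  have hreflect : ∫ θ in (0 : ℝ)..π, w (π - θ) = ∫ θ in (0 : ℝ)..π, w θ := by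
    rw [intervalIntegral.integral_comp_sub_left, sub_self, sub_zero]
  have hmodel : ∫ θ in (0 : ℝ)..π, w θ ≤ π / 2 / (√A * (2 / π)) := by
    rw [hw, intervalIntegral.integral_comp_mul_left (fun u => (1 + u ^ 2)⁻¹) (by positivity),
      smul_eq_mul, mul_zero, integral_inv_one_add_sq, Real.arctan_zero, sub_zero, inv_mul_eq_div]
    gcongr
    exact (Real.arctan_lt_pi_div_two _).le
  calc ∫ θ in (0 : ℝ)..π, (1 + A * Real.sin θ ^ 2)⁻¹
      ≤ ∫ θ in (0 : ℝ)..π, (w θ + w (π - θ)) :=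
        intervalIntegral.integral_mono_on Real.pi_pos.le
          (Continuous.intervalIntegrable
            (Continuous.inv₀ (by fun_prop) fun θ => by positivity) _ _) (hint.add hint') hpt
    _ ≤ π / 2 / (√A * (2 / π)) + π / 2 / (√A * (2 / π)) := by
        rw [intervalIntegral.integral_add hint hint', hreflect]
        gcongr
    _ = π ^ 2 / (2 * √A) := by
        field_simp
        ring

theorem abs_add_abs_mul_cos_div_le {s : ℝ} (hs : s ≠ 0) (θ : ℝ) :
    (|s| + |s * -Real.cos θ|) / ((s * -Real.sin θ) ^ 2 + |s|) ≤
      2 * (1 + |s| * Real.sin θ ^ 2)⁻¹ := by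
  have hquot : (|s| + |s * -Real.cos θ|) / ((s * -Real.sin θ) ^ 2 + |s|) =
      (1 + |Real.cos θ|) * (1 + |s| * Real.sin θ ^ 2)⁻¹ := by
    rw [mul_pow, neg_sq, ← sq_abs s, abs_mul, abs_neg]
    field_simp
    ring
  rw [hquot]
  gcongr
  linarith [Real.abs_cos_le_one θ]

theorem norm_integral_expI_cos_sub_one_mul_le {A A' : ℝ → ℂ} {M M' s : ℝ} (hs : s ≠ 0)
    (hA : ∀ θ ∈ Set.Icc 0 π, HasDerivAt A (A' θ) θ) (hA' : ContinuousOn A' (Set.Icc 0 π))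
    (hAM : ∀ θ ∈ Set.Icc 0 π, ‖A θ‖ ≤ M) (hAM' : ∀ θ ∈ Set.Icc 0 π, ‖A' θ‖ ≤ M') :
    ‖∫ θ in (0 : ℝ)..π, expI (s * (Real.cos θ - 1)) * A θ‖ ≤
      (M * (1 + π ^ 2) + M' * π / 2) / √|s| := by
  have hs' : 0 < |s| := abs_pos.2 hs
  have hAc : ContinuousOn A (Set.Icc 0 π) := HasDerivAt.continuousOn hA
  have hvdc := norm_integral_expI_mul_le (φ' := fun θ => s * -Real.sin θ)
    (φ'' := fun θ => s * -Real.cos θ) Real.pi_pos.le hs'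
    (fun θ _ => ((Real.hasDerivAt_cos θ).sub_const 1).const_mul s)
    (fun θ _ => (Real.hasDerivAt_sin θ).neg.const_mul s) (by fun_prop) hA hA'
  have hM : 0 ≤ M := (norm_nonneg _).trans (hAM 0 ⟨le_rfl, Real.pi_pos.le⟩)
  have hpt : ∀ θ ∈ Set.Icc 0 π,
      (|s| + |s * -Real.cos θ|) / ((s * -Real.sin θ) ^ 2 + |s|) * ‖A θ‖ ≤
        2 * M * (1 + |s| * Real.sin θ ^ 2)⁻¹ := by
    intro θ hθ
    calc _ ≤ 2 * (1 + |s| * Real.sin θ ^ 2)⁻¹ * M := by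
          gcongr
          exacts [abs_add_abs_mul_cos_div_le hs θ, hAM θ hθ]
      _ = _ := by ring
  have hweight : ∫ θ in (0 : ℝ)..π,
      (|s| + |s * -Real.cos θ|) / ((s * -Real.sin θ) ^ 2 + |s|) * ‖A θ‖ ≤
        2 * M * (π ^ 2 / (2 * √|s|)) := by
    refine (intervalIntegral.integral_mono_on Real.pi_pos.le
      (ContinuousOn.intervalIntegrable_of_Icc Real.pi_pos.le ?_)
      (Continuous.intervalIntegrable ?_ _ _) hpt).trans ?_
    · exact ContinuousOn.mul (Continuous.continuousOn <|
        Continuous.div (by fun_prop) (by fun_prop) fun θ => by positivity) (by fun_prop)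
    · exact continuous_const.mul (Continuous.inv₀ (by fun_prop) fun θ => by positivity)
    · rw [intervalIntegral.integral_const_mul]
      gcongr
      exact integral_inv_one_add_mul_sin_sq_le hs'
  calc _ ≤ 1 / (2 * √|s|) * (M + M) + 2 * M * (π ^ 2 / (2 * √|s|)) +
        1 / (2 * √|s|) * (M' * (π - 0)) := by
        refine hvdc.trans ?_
        gcongr
        exacts [hAM 0 ⟨le_rfl, Real.pi_pos.le⟩, hAM π ⟨Real.pi_pos.le, le_rfl⟩,
          integral_norm_le_of_norm_le_const Real.pi_pos.le hA' hAM']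
    _ = _ := by
        field_simp
        ring

/-- The amplitude `∫₀^π e^{is(cos θ - 1)} sinⁿ θ k(θ) dθ` left after extracting the oscillation
`e^{is}` of the pole `θ = 0` from a zonal integral localised by `k`. -/
def zonalAmp (n : ℕ) (k : ℝ → ℝ) (s : ℝ) : ℂ :=
  ∫ θ in (0 : ℝ)..π, expI (s * (Real.cos θ - 1)) * (Real.sin θ ^ n * k θ : ℝ)

theorem ofReal_mul_integral_expI_cos_mul_sin {g g' : ℝ → ℝ} (hg : ∀ θ, HasDerivAt g (g' θ) θ)
    (hg' : Continuous g') (hgπ : g π = 0) (s : ℝ) :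
    s * ∫ θ in (0 : ℝ)..π, expI (s * (Real.cos θ - 1)) * (Real.sin θ * g θ : ℝ) =
      -Complex.I * (g 0 + ∫ θ in (0 : ℝ)..π, expI (s * (Real.cos θ - 1)) * g' θ) := by
  have hparts := integral_expI_mul_deriv_mul (a := 0) (b := π)
    (φ' := fun θ => s * -Real.sin θ) (B := fun θ => g θ)
    (fun θ _ => ((Real.hasDerivAt_cos θ).sub_const 1).const_mul s) (by fun_prop)
    (fun θ _ => (hg θ).ofReal_comp) (by fun_prop)
  rw [hgπ, Real.cos_zero, sub_self, mul_zero, expI_zero, one_mul, Complex.ofReal_zero, mul_zero,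
    sub_zero] at hparts
  rw [neg_mul, ← hparts, ← intervalIntegral.integral_const_mul, ← intervalIntegral.integral_neg]
  congr with θ
  push_cast
  ring

section Decay

variable {k : ℝ → ℝ}

theorem norm_zonalAmp_zero_le (hk : ContDiff ℝ 1 k) :
    ∃ C, ∀ s ≠ 0, ‖zonalAmp 0 k s‖ ≤ C / √|s| := by
  obtain ⟨hdiff, hderiv⟩ := contDiff_one_iff_deriv.1 hk
  obtain ⟨M, hM⟩ := isCompact_Icc.exists_bound_of_continuousOn
    (hk.continuous.continuousOn (s := Set.Icc 0 π))
  obtain ⟨M', hM'⟩ := isCompact_Icc.exists_bound_of_continuousOn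
    (hderiv.continuousOn (s := Set.Icc 0 π))
  refine ⟨M * (1 + π ^ 2) + M' * π / 2, fun s hs => ?_⟩
  simp only [zonalAmp, pow_zero, one_mul]
  exact norm_integral_expI_cos_sub_one_mul_le hs
    (fun θ _ => (hdiff θ).hasDerivAt.ofReal_comp) (by fun_prop)
    (fun θ hθ => (Complex.norm_real _).trans_le (hM θ hθ))
    (fun θ hθ => (Complex.norm_real _).trans_le (hM' θ hθ))

theorem norm_zonalAmp_one_le (hk : ContDiff ℝ 1 k) (hkπ : k π = 0) :
    ∃ C, ∀ s ≠ 0, ‖zonalAmp 1 k s‖ ≤ C / |s| := by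
  obtain ⟨hdiff, hderiv⟩ := contDiff_one_iff_deriv.1 hk
  obtain ⟨M', hM'⟩ := isCompact_Icc.exists_bound_of_continuousOn
    (hderiv.continuousOn (s := Set.Icc 0 π))
  refine ⟨|k 0| + M' * π, fun s hs => ?_⟩
  have hparts := congrArg (‖·‖) <|
    ofReal_mul_integral_expI_cos_mul_sin (fun θ => (hdiff θ).hasDerivAt) hderiv hkπ s
  simp only [norm_mul, norm_neg, Complex.norm_I, one_mul, Complex.norm_real,
    Real.norm_eq_abs] at hparts
  rw [le_div_iff₀ (abs_pos.2 hs), mul_comm]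
  simp only [zonalAmp, pow_one]
  rw [hparts]
  refine norm_add_le_of_le (Complex.norm_real _).le
    ((intervalIntegral.norm_integral_le_integral_norm Real.pi_pos.le).trans ?_)
  simp only [norm_mul, norm_expI, one_mul]
  simpa only [sub_zero] using integral_norm_le_of_norm_le_const Real.pi_pos.le
    (f := fun θ => ((deriv k θ : ℝ) : ℂ)) (by fun_prop)
    fun θ hθ => (Complex.norm_real _).trans_le (hM' θ hθ)

theorem ofReal_mul_zonalAmp_add_two (n : ℕ) (hk : ContDiff ℝ 1 k) (hkπ : k π = 0) (s : ℝ) :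
    s * zonalAmp (n + 2) k s = -Complex.I *
      zonalAmp n (fun θ => (n + 1) * Real.cos θ * k θ + Real.sin θ * deriv k θ) s := by
  have hdiff := hk.differentiable one_ne_zero
  have hkc := hk.continuous
  have hg (θ : ℝ) : HasDerivAt (fun θ => Real.sin θ ^ (n + 1) * k θ)
      (Real.sin θ ^ n * ((n + 1) * Real.cos θ * k θ + Real.sin θ * deriv k θ)) θ := by
    refine (((Real.hasDerivAt_sin θ).pow (n + 1)).mul (hdiff θ).hasDerivAt).congr_deriv ?_
    simp only [Nat.add_sub_cancel, Nat.cast_add, Nat.cast_one, Pi.pow_apply]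
    ring
  have hparts := ofReal_mul_integral_expI_cos_mul_sin hg (by fun_prop) (by simp [hkπ]) s
  simp only [← mul_assoc (Real.sin _), ← pow_succ'] at hparts
  rw [zonalAmp, hparts, Real.sin_zero, zero_pow n.succ_ne_zero, zero_mul, Complex.ofReal_zero,
    zero_add, zonalAmp]

theorem sqrt_abs_pow_add_two (s : ℝ) (n : ℕ) : √|s| ^ (n + 2) = √|s| ^ n * |s| := by
  rw [pow_add, Real.sq_sqrt (abs_nonneg s)]

theorem norm_zonalAmp_le (n : ℕ) (hk : ContDiff ℝ (⊤ : ℕ∞) k)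
    (hk0 : ∀ θ, Real.cos θ = -1 → k =ᶠ[nhds θ] 0) :
    ∃ C, ∀ s ≠ 0, ‖zonalAmp n k s‖ ≤ C / √|s| ^ (n + 1) := by
  have hk1 {k : ℝ → ℝ} (hk : ContDiff ℝ (⊤ : ℕ∞) k) : ContDiff ℝ 1 k := hk.of_le (by simp)
  have hkπ {k : ℝ → ℝ} (hk0 : ∀ θ, Real.cos θ = -1 → k =ᶠ[nhds θ] 0) : k π = 0 :=
    (hk0 π Real.cos_pi).eq_of_nhds
  induction n using Nat.twoStepInduction generalizing k with
  | zero => simpa only [zero_add, pow_one] using norm_zonalAmp_zero_le (hk1 hk)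
  | one =>
    simpa only [Nat.reduceAdd, Real.sq_sqrt (abs_nonneg _)]
      using norm_zonalAmp_one_le (hk1 hk) (hkπ hk0)
  | more n ih _ =>
    obtain ⟨C, hC⟩ := ih (k := fun θ => (n + 1) * Real.cos θ * k θ + Real.sin θ * deriv k θ)
      (by fun_prop) fun θ hθ => by
        filter_upwards [hk0 θ hθ, (hk0 θ hθ).deriv] with u hu hu'
        simp only [hu, hu', Pi.zero_apply, deriv_zero, mul_zero, add_zero]
    refine ⟨C, fun s hs => ?_⟩
    have hparts := congrArg (‖·‖) (ofReal_mul_zonalAmp_add_two n (hk1 hk) (hkπ hk0) s)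
    simp only [norm_mul, norm_neg, Complex.norm_I, one_mul, Complex.norm_real,
      Real.norm_eq_abs] at hparts
    rw [add_right_comm, sqrt_abs_pow_add_two, ← div_div, le_div_iff₀ (abs_pos.2 hs), mul_comm,
      hparts]
    exact hC s hs

theorem contDiff_div_one_add_cos (hk : ContDiff ℝ (⊤ : ℕ∞) k)
    (hk0 : ∀ θ, Real.cos θ = -1 → k =ᶠ[nhds θ] 0) :
    ContDiff ℝ (⊤ : ℕ∞) fun θ => k θ / (1 + Real.cos θ) := by
  rw [contDiff_iff_contDiffAt]
  intro θ
  by_cases hθ : Real.cos θ = -1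
  · refine (contDiffAt_const (c := (0 : ℝ))).congr_of_eventuallyEq ?_
    filter_upwards [hk0 θ hθ] with u hu
    rw [hu, Pi.zero_apply, zero_div]
  · exact hk.contDiffAt.div (by fun_prop) fun h => hθ (by linarith)

/- `(cos θ - 1)(1 + cos θ) = -sin² θ`: each derivative in `s` gains two powers of `sin θ`, that is,
one power of `s`. -/
theorem hasDerivAt_zonalAmp (n : ℕ) (hk : Continuous k) (hk0 : ∀ θ, Real.cos θ = -1 → k θ = 0)
    (s : ℝ) :
    HasDerivAt (zonalAmp n k)
      (-Complex.I * zonalAmp (n + 2) (fun θ => k θ / (1 + Real.cos θ)) s) s := by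
  obtain ⟨M, hM⟩ := isCompact_Icc.exists_bound_of_continuousOn
    (f := fun θ => (Real.cos θ - 1) * (Real.sin θ ^ n * k θ))
    (Continuous.continuousOn (s := Set.Icc 0 π) (by fun_prop))
  have hderiv := (intervalIntegral.hasDerivAt_integral_of_dominated_loc_of_deriv_le
    (μ := volume) (a := 0) (b := π) (x₀ := s) (s := Set.univ) (bound := fun _ => M)
    (F := fun s θ => expI (s * (Real.cos θ - 1)) * (Real.sin θ ^ n * k θ : ℝ))
    (F' := fun s θ => expI (s * (Real.cos θ - 1)) * (Complex.I * (1 * (Real.cos θ - 1) : ℝ)) *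
      (Real.sin θ ^ n * k θ : ℝ)) Filter.univ_mem
    (Filter.Eventually.of_forall fun s => Continuous.aestronglyMeasurable (by fun_prop))
    (Continuous.intervalIntegrable (by fun_prop) _ _)
    (Continuous.aestronglyMeasurable (by fun_prop)) ?_ intervalIntegrable_const ?_).2
  · refine hderiv.congr_deriv ?_
    rw [zonalAmp, ← intervalIntegral.integral_const_mul]
    congr with θ
    have hgain : (Real.cos θ - 1) * (Real.sin θ ^ n * k θ) =
        -(Real.sin θ ^ (n + 2) * (k θ / (1 + Real.cos θ))) := by
      by_cases hθ : Real.cos θ = -1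
      · rw [hk0 θ hθ, zero_div, mul_zero, mul_zero, mul_zero, neg_zero]
      · have hne : 1 + Real.cos θ ≠ 0 := fun h => hθ (by linarith)
        field_simp
        rw [pow_add, Real.sin_sq]
        ring
    have hcast := congrArg (Complex.ofReal) hgain
    push_cast at hcast ⊢
    linear_combination expI (s * (Real.cos θ - 1)) * Complex.I * hcast
  · filter_upwards with θ hθ x _
    rw [Set.uIoc_of_le Real.pi_pos.le] at hθ
    rw [mul_assoc, norm_mul, norm_expI, mul_assoc, norm_mul, Complex.norm_I,
      ← Complex.ofReal_mul, Complex.norm_real, one_mul, one_mul, one_mul]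
    exact hM θ (Set.Ioc_subset_Icc_self hθ)
  · filter_upwards with θ _ x _
    exact (hasDerivAt_expI_comp ((hasDerivAt_id x).mul_const _)).mul_const _

theorem continuous_zonalAmp (n : ℕ) (hk : Continuous k)
    (hk0 : ∀ θ, Real.cos θ = -1 → k θ = 0) : Continuous (zonalAmp n k) :=
  continuous_iff_continuousAt.2 fun s => (hasDerivAt_zonalAmp n hk hk0 s).continuousAt

end Decay

/-- A smooth localisation to a neighbourhood of the pole `θ = 0` which vanishes near `θ = π` and
forms a partition of unity with its reflection `θ ↦ π - θ`. -/
def poleCutoff (θ : ℝ) : ℝ :=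
  Real.smoothTransition (1 / 2 + Real.cos θ)

theorem contDiff_poleCutoff : ContDiff ℝ (⊤ : ℕ∞) poleCutoff :=
  Real.smoothTransition.contDiff.comp (contDiff_const.add Real.contDiff_cos)

theorem poleCutoff_eventuallyEq_zero {θ : ℝ} (hθ : Real.cos θ = -1) :
    poleCutoff =ᶠ[nhds θ] 0 := by
  have hcos : Real.cos θ < -(1 / 2) := by linarith
  filter_upwards [Real.continuous_cos.continuousAt.eventually_lt_const hcos] with u hu
  exact Real.smoothTransition.zero_of_nonpos (by linarith)

theorem smoothTransition_add_smoothTransition_one_sub (x : ℝ) :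
    Real.smoothTransition x + Real.smoothTransition (1 - x) = 1 := by
  rw [Real.smoothTransition, Real.smoothTransition, sub_sub_cancel,
    add_comm (expNegInvGlue (1 - x)), ← add_div, div_self (Real.smoothTransition.pos_denom x).ne']

theorem poleCutoff_add_poleCutoff_pi_sub (θ : ℝ) : poleCutoff θ + poleCutoff (π - θ) = 1 := by
  rw [← smoothTransition_add_smoothTransition_one_sub (1 / 2 + Real.cos θ), poleCutoff, poleCutoff,
    Real.cos_pi_sub]
  ring_nf

theorem integral_expI_mul_cos (n : ℕ) (s : ℝ) :
    ∫ θ in (0 : ℝ)..π, expI (s * Real.cos θ) * (Real.sin θ ^ n : ℝ) =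
      expI s * zonalAmp n poleCutoff s + expI (-s) * zonalAmp n poleCutoff (-s) := by
  have hcut : Continuous poleCutoff := contDiff_poleCutoff.continuous
  have hreflect : zonalAmp n poleCutoff (-s) = ∫ θ in (0 : ℝ)..π,
      expI (-s * (Real.cos (π - θ) - 1)) * (Real.sin (π - θ) ^ n * poleCutoff (π - θ) : ℝ) := by
    rw [intervalIntegral.integral_comp_sub_left (fun θ => expI (-s * (Real.cos θ - 1)) *
      (Real.sin θ ^ n * poleCutoff θ : ℝ)), sub_self, sub_zero, zonalAmp]
  rw [hreflect, zonalAmp, ← intervalIntegral.integral_const_mul,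
    ← intervalIntegral.integral_const_mul,
    ← intervalIntegral.integral_add (Continuous.intervalIntegrable (by fun_prop) _ _)
      (Continuous.intervalIntegrable (by fun_prop) _ _)]
  congr with θ
  have hpole : expI s * expI (s * (Real.cos θ - 1)) = expI (s * Real.cos θ) := by
    rw [← expI_add]
    ring_nf
  have hantipode : expI (-s) * expI (-s * (-Real.cos θ - 1)) = expI (s * Real.cos θ) := by
    rw [← expI_add]
    ring_nf
  rw [Real.sin_pi_sub, Real.cos_pi_sub, ← mul_assoc, hpole, ← mul_assoc, hantipode, ← mul_add,
    ← Complex.ofReal_add, ← mul_add, poleCutoff_add_poleCutoff_pi_sub, mul_one]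

/-! ### Fourier transforms of radial functions -/

theorem integral_inner_norm_eq {n : ℕ} (x : Euc (n + 1)) (f : ℝ → ℝ → ℂ) :
    ∫ ξ : Euc (n + 1), f ⟪x, ξ⟫ ‖ξ‖ = ∫ ξ : Euc (n + 1), f (‖x‖ * ξ 0) ‖ξ‖ := by
  set e : Euc (n + 1) := EuclideanSpace.single 0 1
  have hnorm : ‖x‖ = ‖‖x‖ • e‖ := by
    rw [norm_smul, norm_norm, PiLp.norm_single, norm_one, mul_one]
  set R := (ℝ ∙ (x - ‖x‖ • e))ᗮ.reflection
  have hinner (ξ : Euc (n + 1)) : ⟪x, R ξ⟫ = ‖x‖ * ξ 0 := by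
    rw [← R.inner_map_map, Submodule.reflection_sub hnorm, Submodule.reflection_reflection,
      inner_smul_left, EuclideanSpace.inner_single_left, map_one, one_mul, conj_trivial]
  rw [← R.measurePreserving.integral_comp R.toHomeomorph.measurableEmbedding]
  simp only [hinner, R.norm_map]

theorem integral_coord_norm_eq {n : ℕ} (f : ℝ → ℝ → ℂ) :
    ∫ ξ : Euc (n + 1), f (ξ 0) ‖ξ‖ =
      ∫ z : ℝ × Euc n, f z.1 (√(z.1 ^ 2 + ‖z.2‖ ^ 2)) := by
  have hofLp : MeasurePreserving (Prod.map id (@WithLp.ofLp 2 (Fin n → ℝ)) :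
      ℝ × Euc n → ℝ × (Fin n → ℝ)) :=
    (MeasurePreserving.id volume).prod (PiLp.volume_preserving_ofLp (Fin n))
  rw [← (PiLp.volume_preserving_toLp (Fin (n + 1))).integral_comp
      (MeasurableEquiv.toLp 2 (Fin (n + 1) → ℝ)).measurableEmbedding,
    ← (volume_preserving_piFinSuccAbove (fun _ : Fin (n + 1) => ℝ) 0).symm.integral_comp
      (MeasurableEquiv.measurableEmbedding _),
    ← hofLp.integral_comp (MeasurableEmbedding.id.prodMap
      (MeasurableEquiv.toLp 2 (Fin n → ℝ)).symm.measurableEmbedding)]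
  congr with z
  simp only [MeasurableEquiv.piFinSuccAbove, MeasurableEquiv.symm_mk, MeasurableEquiv.coe_mk,
    Fin.insertNthEquiv, Equiv.symm_symm, Equiv.coe_fn_mk, Prod.map_fst, Prod.map_snd, id_eq,
    EuclideanSpace.norm_eq, Real.norm_eq_abs, sq_abs,
    Fin.sum_univ_succ, Fin.insertNth_zero, Fin.cons_zero, Fin.cons_succ, cast_eq]
  rw [Real.sq_sqrt (by positivity)]

theorem hasCompactSupport_of_eq_zero_of_lt_sqrt {E : Type*} [NormedAddCommGroup E] [ProperSpace E]
    {g : ℝ × E → ℂ} {R : ℝ} (hg : ∀ z, R < √(z.1 ^ 2 + ‖z.2‖ ^ 2) → g z = 0) :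
    HasCompactSupport g := by
  refine HasCompactSupport.intro (isCompact_closedBall 0 R) fun z hz => hg z ?_
  rw [mem_closedBall_zero_iff, not_le, Prod.norm_def, lt_max_iff] at hz
  rcases hz with hz | hz
  · exact hz.trans_le (Real.abs_le_sqrt (by linarith [sq_nonneg ‖z.2‖]))
  · exact hz.trans_le (Real.le_sqrt_of_sq_le (by linarith [sq_nonneg z.1]))

/-- The surface area of the unit sphere of `ℝ^(m+1)`, written as the derivative of the volume of
balls at radius `1`. -/
def sphereArea (m : ℕ) : ℝ :=
  (m + 1) * volume.real (Metric.ball (0 : Euc (m + 1)) 1)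

theorem integral_coord_norm_eq_integral_upperHalfPlane {m : ℕ} {f : ℝ → ℝ → ℂ} {R : ℝ}
    (hf : Continuous (Function.uncurry f)) (hf0 : ∀ u r, R < r → f u r = 0) :
    ∫ ξ : Euc (m + 2), f (ξ 0) ‖ξ‖ = sphereArea m * ∫ z in Set.univ ×ˢ Set.Ioi (0 : ℝ),
      (z.2 : ℂ) ^ m * f z.1 (√(z.1 ^ 2 + z.2 ^ 2)) := by
  have hfc : Continuous fun p : ℝ × ℝ => f p.1 p.2 := hf
  have hint : Integrable fun z : ℝ × Euc (m + 1) => f z.1 (√(z.1 ^ 2 + ‖z.2‖ ^ 2)) :=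
    Continuous.integrable_of_hasCompactSupport
      (hfc.comp (continuous_fst.prodMk (by fun_prop)))
      (hasCompactSupport_of_eq_zero_of_lt_sqrt fun z hz => hf0 _ _ hz)
  have hint' : Integrable fun z : ℝ × ℝ => (z.2 : ℂ) ^ m * f z.1 (√(z.1 ^ 2 + z.2 ^ 2)) := by
    have hpolar : Continuous fun z : ℝ × ℝ => (z.1, √(z.1 ^ 2 + z.2 ^ 2)) := by fun_prop
    refine Continuous.integrable_of_hasCompactSupport
      (Continuous.mul (by fun_prop) (hfc.comp hpolar))
      (hasCompactSupport_of_eq_zero_of_lt_sqrt (R := R) fun z hz => ?_)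
    rw [Real.norm_eq_abs, sq_abs] at hz
    rw [hf0 _ _ hz, mul_zero]
  have hslice (u : ℝ) : ∫ η : Euc (m + 1), f u (√(u ^ 2 + ‖η‖ ^ 2)) =
      sphereArea m * ∫ y in Set.Ioi (0 : ℝ), (y : ℂ) ^ m * f u (√(u ^ 2 + y ^ 2)) := by
    rw [integral_fun_norm_addHaar volume fun y => f u (√(u ^ 2 + y ^ 2)),
      finrank_euclideanSpace_fin, sphereArea, nsmul_eq_mul, Nat.add_sub_cancel]
    simp only [Complex.real_smul]
    push_cast
    ring
  rw [integral_coord_norm_eq, Measure.volume_eq_prod, integral_prod _ hint]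
  simp only [hslice]
  rw [integral_const_mul, Measure.volume_eq_prod, setIntegral_prod _ hint'.integrableOn,
    setIntegral_univ]

theorem setIntegral_upperHalfPlane_eq_polar (g : ℝ × ℝ → ℂ) :
    ∫ z in Set.univ ×ˢ Set.Ioi (0 : ℝ), g z =
      ∫ p in Set.Ioi (0 : ℝ) ×ˢ Set.Ioo 0 π, (p.1 : ℂ) * g (polarCoord.symm p) := by
  have hsub : Set.Ioi (0 : ℝ) ×ˢ Set.Ioo 0 π ⊆ polarCoord.target :=
    Set.prod_mono subset_rfl (Set.Ioo_subset_Ioo_left (by linarith [Real.pi_pos]))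
  have hsin : ∀ p ∈ polarCoord.target,
      (polarCoord.symm p ∈ (Set.univ : Set ℝ) ×ˢ Set.Ioi (0 : ℝ) ↔
        p ∈ Set.Ioi (0 : ℝ) ×ˢ Set.Ioo 0 π) := by
    rintro ⟨r, θ⟩ ⟨hr : 0 < r, hθ : -π < θ ∧ θ < π⟩
    simp only [polarCoord_symm_apply, Set.mem_prod, Set.mem_univ, Set.mem_Ioi, Set.mem_Ioo,
      mul_pos_iff_of_pos_left hr, true_and, hr, hθ.2, and_true]
    refine ⟨fun h => ?_, fun h => Real.sin_pos_of_pos_of_lt_pi h hθ.2⟩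
    contrapose! h
    exact Real.sin_nonpos_of_nonpos_of_neg_pi_le h hθ.1.le
  rw [← integral_indicator (MeasurableSet.univ.prod measurableSet_Ioi),
    ← integral_comp_polarCoord_symm, ← Set.inter_eq_right.2 hsub,
    ← setIntegral_indicator (measurableSet_Ioi.prod measurableSet_Ioo)]
  refine setIntegral_congr_fun polarCoord.open_target.measurableSet fun p hp => ?_
  by_cases hmem : p ∈ Set.Ioi (0 : ℝ) ×ˢ Set.Ioo 0 π
  · simp only [Set.indicator_of_mem hmem, Set.indicator_of_mem ((hsin p hp).2 hmem),
      Complex.real_smul]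
  · simp only [Set.indicator_of_notMem hmem, Set.indicator_of_notMem (mt (hsin p hp).1 hmem),
      smul_zero]

section Radial

variable {F : ℝ → ℂ} {a b : ℝ}

theorem integral_Ioi_eq_intervalIntegral (ha : 0 ≤ a) (hab : a ≤ b)
    (hF : ∀ r, 0 ≤ r → r ∉ Set.Ioo a b → F r = 0) :
    ∫ r in Set.Ioi (0 : ℝ), F r = ∫ r in a..b, F r := by
  rw [intervalIntegral.integral_of_le hab]
  exact setIntegral_eq_of_subset_of_forall_sdiff_eq_zero measurableSet_Ioi
    (fun r hr => ha.trans_lt hr.1)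
    fun r hr => hF r (Set.mem_Ioi.1 hr.1).le fun h => hr.2 ⟨h.1, h.2.le⟩

theorem integral_expI_inner_mul_norm_one (ha : 0 ≤ a) (hab : a ≤ b) (hF : Continuous F)
    (hF0 : ∀ r, 0 ≤ r → r ∉ Set.Ioo a b → F r = 0) (x : Euc 1) :
    ∫ ξ : Euc 1, expI ⟪x, ξ⟫ * F ‖ξ‖ =
      (∫ r in a..b, expI (‖x‖ * r) * F r) + ∫ r in a..b, expI (-‖x‖ * r) * F r := by
  set g : ℝ → ℂ := fun u => expI (‖x‖ * u) * F |u| with hg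
  have hgint : Integrable g := by
    refine Continuous.integrable_of_hasCompactSupport (by fun_prop) <|
      HasCompactSupport.intro (isCompact_closedBall 0 b) fun u hu => ?_
    rw [mem_closedBall_zero_iff, Real.norm_eq_abs] at hu
    simp only [hg, hF0 _ (abs_nonneg u) fun h => hu h.2.le, mul_zero]
  have hline : ∫ ξ : Euc 1, expI ⟪x, ξ⟫ * F ‖ξ‖ = ∫ u, g u := by
    rw [integral_inner_norm_eq x fun u r => expI u * F r,
      integral_coord_norm_eq fun u r => expI (‖x‖ * u) * F r]
    have hg1 (z : ℝ × Euc 0) :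
        expI (‖x‖ * z.1) * F (√(z.1 ^ 2 + ‖z.2‖ ^ 2)) = g z.1 * 1 := by
      rw [Subsingleton.elim z.2 0, norm_zero, zero_pow two_ne_zero, add_zero,
        Real.sqrt_sq_eq_abs, mul_one]
    simp only [hg1]
    rw [Measure.volume_eq_prod, integral_prod_mul g fun _ => (1 : ℂ),
      volume_euclideanSpace_eq_dirac, integral_dirac, mul_one]
  rw [hline, ← intervalIntegral.integral_Iic_add_Ioi (b := 0) hgint.integrableOn
    hgint.integrableOn, add_comm, ← neg_zero, ← integral_comp_neg_Ioi, neg_zero,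
    ← integral_Ioi_eq_intervalIntegral ha hab fun r hr h => by rw [hF0 r hr h, mul_zero],
    ← integral_Ioi_eq_intervalIntegral ha hab fun r hr h => by rw [hF0 r hr h, mul_zero]]
  congr 1 <;> refine setIntegral_congr_fun measurableSet_Ioi fun r hr => ?_
  · simp only [hg, abs_of_pos (Set.mem_Ioi.1 hr)]
  · simp only [hg, abs_neg, abs_of_pos (Set.mem_Ioi.1 hr), mul_neg, neg_mul]

theorem integral_expI_inner_mul_norm_add_two {m : ℕ} (ha : 0 ≤ a) (hab : a ≤ b)
    (hF : Continuous F) (hF0 : ∀ r, 0 ≤ r → r ∉ Set.Ioo a b → F r = 0) (x : Euc (m + 2)) :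
    ∫ ξ : Euc (m + 2), expI ⟪x, ξ⟫ * F ‖ξ‖ =
      sphereArea m * ∫ r in a..b, ∫ θ in (0 : ℝ)..π,
        F r * r ^ (m + 1) * (expI (‖x‖ * r * Real.cos θ) * (Real.sin θ ^ m : ℝ)) := by
  set K : ℝ × ℝ → ℂ := fun p => F p.1 * p.1 ^ (m + 1) *
    (expI (‖x‖ * p.1 * Real.cos p.2) * (Real.sin p.2 ^ m : ℝ)) with hK
  have hKc : Continuous K := by fun_prop
  have hf0 (u r : ℝ) (hr : max b 0 < r) : expI (‖x‖ * u) * F r = 0 := by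
    rw [hF0 r ((le_max_right _ _).trans hr.le) fun h => (le_max_left b 0).not_gt (hr.trans h.2),
      mul_zero]
  rw [integral_inner_norm_eq x fun u r => expI u * F r,
    integral_coord_norm_eq_integral_upperHalfPlane
      (f := fun u r => expI (‖x‖ * u) * F r) (by fun_prop) hf0,
    setIntegral_upperHalfPlane_eq_polar]
  have hpolar : ∀ p ∈ Set.Ioi (0 : ℝ) ×ˢ Set.Ioo 0 π,
      (p.1 : ℂ) * (((polarCoord.symm p).2 : ℂ) ^ m * (expI (‖x‖ * (polarCoord.symm p).1) *
        F (√((polarCoord.symm p).1 ^ 2 + (polarCoord.symm p).2 ^ 2)))) = K p := by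
    rintro ⟨r, θ⟩ ⟨hr : 0 < r, -⟩
    have hradius : √((r * Real.cos θ) ^ 2 + (r * Real.sin θ) ^ 2) = r := by
      rw [mul_pow, mul_pow, ← mul_add, Real.cos_sq_add_sin_sq, mul_one, Real.sqrt_sq hr.le]
    simp only [polarCoord_symm_apply, hradius, hK]
    push_cast
    ring_nf
  rw [setIntegral_congr_fun (measurableSet_Ioi.prod measurableSet_Ioo) hpolar,
    setIntegral_eq_of_subset_of_forall_sdiff_eq_zero (s := Set.Ioc a b ×ˢ Set.Ioo 0 π)
      (measurableSet_Ioi.prod measurableSet_Ioo)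
      (Set.prod_mono (fun r hr => ha.trans_lt hr.1) subset_rfl)
      fun p hp => by
        simp only [hK]
        rw [hF0 p.1 (Set.mem_Ioi.1 hp.1.1).le fun h => hp.2 ⟨⟨h.1, h.2.le⟩, hp.1.2⟩, zero_mul,
          zero_mul],
    Measure.volume_eq_prod, setIntegral_prod]
  · rw [intervalIntegral.integral_of_le hab]
    simp only [intervalIntegral.integral_of_le Real.pi_pos.le, integral_Ioc_eq_integral_Ioo, hK]
  · exact (hKc.continuousOn.integrableOn_compact (isCompact_Icc.prod isCompact_Icc)).mono_set
      (Set.prod_mono Set.Ioc_subset_Icc_self Set.Ioo_subset_Icc_self)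

end Radial

/-- An amplitude which, away from the origin, has size `|u|^(-m/2)` and whose derivative gains one
more power of `|u|`. Such amplitudes describe the spherical averages of plane waves. -/
structure IsHalfPowerAmplitude (m : ℕ) (C : ℝ) (H : ℝ → ℂ) : Prop where
  contDiff : ContDiff ℝ 1 H
  norm_le : ∀ u ≠ 0, ‖H u‖ ≤ C / √|u| ^ m
  norm_deriv_le : ∀ u ≠ 0, ‖deriv H u‖ ≤ C / (√|u| ^ m * |u|)

theorem isHalfPowerAmplitude_one : IsHalfPowerAmplitude 0 1 fun _ => 1 where
  contDiff := contDiff_const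
  norm_le u _ := by rw [norm_one, pow_zero, div_one]
  norm_deriv_le u _ := by
    rw [deriv_const, norm_zero]
    positivity

theorem exists_isHalfPowerAmplitude_const_mul_zonalAmp (m : ℕ) (c : ℂ) :
    ∃ C, IsHalfPowerAmplitude (m + 1) C fun s => c * zonalAmp m poleCutoff s := by
  set k : ℝ → ℝ := fun θ => poleCutoff θ / (1 + Real.cos θ) with hk
  have hcut0 (θ : ℝ) (hθ : Real.cos θ = -1) := poleCutoff_eventuallyEq_zero hθ
  have hkc : ContDiff ℝ (⊤ : ℕ∞) k := contDiff_div_one_add_cos contDiff_poleCutoff hcut0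
  have hk0 (θ : ℝ) (hθ : Real.cos θ = -1) : k =ᶠ[nhds θ] 0 := by
    filter_upwards [hcut0 θ hθ] with u hu
    simp only [hk, hu, Pi.zero_apply, zero_div]
  have hderiv (s : ℝ) := (hasDerivAt_zonalAmp m contDiff_poleCutoff.continuous
    (fun θ hθ => (hcut0 θ hθ).eq_of_nhds) s).const_mul c
  have hcont : Continuous (zonalAmp (m + 2) k) :=
    continuous_zonalAmp (m + 2) hkc.continuous fun θ hθ => (hk0 θ hθ).eq_of_nhds
  obtain ⟨C₁, hC₁⟩ := norm_zonalAmp_le m contDiff_poleCutoff hcut0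
  obtain ⟨C₂, hC₂⟩ := norm_zonalAmp_le (m + 2) hkc hk0
  refine ⟨‖c‖ * max C₁ C₂, contDiff_one_iff_deriv.2 ⟨fun s => (hderiv s).differentiableAt, ?_⟩,
    fun u hu => ?_, fun u hu => ?_⟩
  · rw [funext fun s => (hderiv s).deriv]
    fun_prop
  · rw [norm_mul, mul_div_assoc]
    gcongr
    refine (hC₁ u hu).trans ?_
    gcongr
    exact le_max_left _ _
  · rw [(hderiv u).deriv, norm_mul, norm_mul, norm_neg, Complex.norm_I, one_mul, mul_div_assoc,
      ← sqrt_abs_pow_add_two]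
    gcongr
    refine (hC₂ u hu).trans ?_
    rw [add_right_comm]
    gcongr
    exact le_max_right _ _

theorem exists_integral_expI_inner_mul_norm_eq (n : ℕ) :
    ∃ C H, IsHalfPowerAmplitude n C H ∧ ∀ {a b : ℝ} {F : ℝ → ℂ}, 0 ≤ a → a ≤ b → Continuous F →
      (∀ r, 0 ≤ r → r ∉ Set.Ioo a b → F r = 0) → ∀ x : Euc (n + 1),
      ∫ ξ : Euc (n + 1), expI ⟪x, ξ⟫ * F ‖ξ‖ =
        (∫ r in a..b, expI (‖x‖ * r) * (F r * r ^ n * H (‖x‖ * r))) +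
        ∫ r in a..b, expI (-‖x‖ * r) * (F r * r ^ n * H (-‖x‖ * r)) := by
  rcases n with _ | m
  · refine ⟨1, fun _ => 1, isHalfPowerAmplitude_one, fun ha hab hF hF0 x => ?_⟩
    simp only [pow_zero, mul_one]
    exact integral_expI_inner_mul_norm_one ha hab hF hF0 x
  · obtain ⟨C, hH⟩ := exists_isHalfPowerAmplitude_const_mul_zonalAmp m (sphereArea m)
    refine ⟨C, _, hH, fun ha hab hF hF0 x => ?_⟩
    have hcont : Continuous (zonalAmp m poleCutoff) := continuous_zonalAmp m
      contDiff_poleCutoff.continuous fun θ hθ => (poleCutoff_eventuallyEq_zero hθ).eq_of_nhds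
    rw [integral_expI_inner_mul_norm_add_two ha hab hF hF0 x,
      ← intervalIntegral.integral_add (Continuous.intervalIntegrable (by fun_prop) _ _)
        (Continuous.intervalIntegrable (by fun_prop) _ _),
      ← intervalIntegral.integral_const_mul]
    refine intervalIntegral.integral_congr fun r _ => ?_
    simp only [intervalIntegral.integral_const_mul, integral_expI_mul_cos, neg_mul]
    ring

/- The plane wave at frequency `x`, averaged over a sphere, is a superposition of plane waves on the
line with frequencies in `[-‖x‖, ‖x‖]`. -/
theorem exists_norm_integral_expI_inner_mul_norm_le (n : ℕ) :
    ∃ C, ∀ {a b : ℝ} {F : ℝ → ℂ}, 0 ≤ a → a ≤ b → Continuous F →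
      (∀ r, 0 ≤ r → r ∉ Set.Ioo a b → F r = 0) → ∀ (x : Euc (n + 1)) (B : ℝ),
      (∀ σ ∈ Set.Icc (-‖x‖) ‖x‖, ‖∫ r in a..b, expI (σ * r) * (F r * r ^ n)‖ ≤ B) →
        ‖∫ ξ : Euc (n + 1), expI ⟪x, ξ⟫ * F ‖ξ‖‖ ≤ C * B := by
  rcases n with _ | m
  · refine ⟨2, fun ha hab hF hF0 x B hB => ?_⟩
    simp only [pow_zero, mul_one] at hB
    rw [integral_expI_inner_mul_norm_one ha hab hF hF0 x, two_mul]
    have hx := neg_le_self (norm_nonneg x)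
    exact norm_add_le_of_le (hB _ ⟨hx, le_rfl⟩) (hB _ ⟨le_rfl, hx⟩)
  · refine ⟨|sphereArea m| * π, fun {a b F} ha hab hF hF0 x B hB => ?_⟩
    have hswap := intervalIntegral_intervalIntegral_swap
      (a := a) (b := b) (c := 0) (d := π) (F := fun r θ => F r * r ^ (m + 1) *
        (expI (‖x‖ * r * Real.cos θ) * (Real.sin θ ^ m : ℝ)))
      ((ContinuousOn.integrableOn_compact (isCompact_uIcc.prod isCompact_uIcc)
        (by fun_prop)).mono_set
        (Set.prod_mono Set.uIoc_subset_uIcc Set.uIoc_subset_uIcc))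
    rw [integral_expI_inner_mul_norm_add_two ha hab hF hF0 x, hswap, norm_mul, Complex.norm_real,
      Real.norm_eq_abs, mul_assoc]
    gcongr
    have hslice (θ : ℝ) : ‖∫ r in a..b, F r * r ^ (m + 1) *
        (expI (‖x‖ * r * Real.cos θ) * (Real.sin θ ^ m : ℝ))‖ ≤ B := by
      have hσ : ‖x‖ * Real.cos θ ∈ Set.Icc (-‖x‖) ‖x‖ := by
        rw [Set.mem_Icc, ← abs_le, abs_mul, abs_norm]
        exact mul_le_of_le_one_right (norm_nonneg x) (Real.abs_cos_le_one θ)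
      calc _ = ‖(∫ r in a..b, expI (‖x‖ * Real.cos θ * r) * (F r * r ^ (m + 1))) *
            (Real.sin θ ^ m : ℝ)‖ := by
            rw [← intervalIntegral.integral_mul_const]
            congr 2 with r
            rw [mul_right_comm ‖x‖]
            ring
        _ ≤ B := by
            rw [norm_mul, Complex.norm_real, norm_pow]
            exact (mul_le_of_le_one_right (norm_nonneg _)
              (pow_le_one₀ (norm_nonneg _) (Real.abs_sin_le_one θ))).trans (hB _ hσ)
    refine (intervalIntegral.norm_integral_le_of_norm_le_const fun θ _ => hslice θ).trans_eq ?_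
    rw [sub_zero, abs_of_pos Real.pi_pos, mul_comm]

/-! ### Nonstationary phase with parameters -/

theorem isOpen_univ_prod_Ioi {E : Type*} [TopologicalSpace E] :
    IsOpen ((Set.univ : Set E) ×ˢ Set.Ioi (0 : ℝ)) :=
  isOpen_univ.prod isOpen_Ioi

section DerivLast

variable {E : Type*} [NormedAddCommGroup E] [NormedSpace ℝ E]

/-- The partial derivative in the last variable of a function on `E × ℝ`; the variable in `E` is a
parameter of the phase. -/
def derivLast (f : E × ℝ → ℝ) (z : E × ℝ) : ℝ :=
  fderiv ℝ f z (0, 1)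

variable {U : Set (E × ℝ)} {f : E × ℝ → ℝ}

theorem contDiffOn_derivLast (hU : IsOpen U) (hf : ContDiffOn ℝ (⊤ : ℕ∞) f U) :
    ContDiffOn ℝ (⊤ : ℕ∞) (derivLast f) U :=
  (hf.fderiv_of_isOpen hU (by simp)).clm_apply contDiffOn_const

theorem hasDerivAt_derivLast (hU : IsOpen U) (hf : ContDiffOn ℝ (⊤ : ℕ∞) f U) {p : E} {r : ℝ}
    (hpr : (p, r) ∈ U) : HasDerivAt (fun r => f (p, r)) (derivLast f (p, r)) r :=
  ((hf.contDiffAt (hU.mem_nhds hpr)).differentiableAt (by simp)).hasFDerivAt.comp_hasDerivAt r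
    ((hasDerivAt_const r p).prodMk (hasDerivAt_id r))

theorem derivLast_eq_zero {S : Set ℝ} (hU : IsOpen U) (hS : IsClosed S)
    (hf : ∀ z ∈ U, z.2 ∉ S → f z = 0) : ∀ z ∈ U, z.2 ∉ S → derivLast f z = 0 := by
  intro z hz hzS
  have hzero : f =ᶠ[nhds z] fun _ => 0 := by
    filter_upwards [hU.mem_nhds hz,
      (hS.isOpen_compl.preimage continuous_snd).mem_nhds hzS] with w hw hwS
    exact hf w hw hwS
  rw [derivLast, hzero.fderiv_eq, fderiv_const_apply, zero_apply]

variable {K : Set E} {a b : ℝ}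

theorem mul_norm_integral_expI_mul_le {φ φ' A B B' : ℝ → ℝ} {T : ℝ} (hab : a ≤ b) (hT : 0 ≤ T)
    (hφ : ∀ r ∈ Set.Icc a b, HasDerivAt φ (φ' r) r) (hφ' : ContinuousOn φ' (Set.Icc a b))
    (hB : ∀ r ∈ Set.Icc a b, HasDerivAt B (B' r) r) (hB' : ContinuousOn B' (Set.Icc a b))
    (hA : ∀ r ∈ Set.Icc a b, A r = φ' r * B r) (hBa : B a = 0) (hBb : B b = 0) :
    T * ‖∫ r in a..b, expI (T * φ r) * A r‖ ≤ ‖∫ r in a..b, expI (T * φ r) * B' r‖ := by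
  rw [← Set.uIcc_of_le hab] at hφ hφ' hB hB' hA
  have hparts := integral_expI_mul_deriv_mul (B := fun r => B r) (B' := fun r => B' r)
    (fun r hr => (hφ r hr).const_mul T) (continuousOn_const.mul hφ')
    (fun r hr => (hB r hr).ofReal_comp) (by fun_prop)
  rw [hBa, hBb, Complex.ofReal_zero, mul_zero, mul_zero, sub_zero, zero_add] at hparts
  calc T * ‖∫ r in a..b, expI (T * φ r) * A r‖
      = ‖∫ r in a..b, expI (T * φ r) * ((T * φ' r : ℝ) * B r)‖ := by
        nth_rw 1 [← abs_of_nonneg hT]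
        rw [← Real.norm_eq_abs, ← Complex.norm_real, ← norm_mul,
          ← intervalIntegral.integral_const_mul]
        refine congrArg _ (intervalIntegral.integral_congr fun r hr => ?_)
        simp only [hA r hr]
        push_cast
        ring
    _ ≤ _ := by rw [hparts, norm_mul, Complex.norm_I, one_mul]

theorem exists_norm_integral_expI_mul_le_div_pow {S : Set ℝ} (hab : a ≤ b) (hU : IsOpen U)
    (hK : IsCompact K) (hKU : K ×ˢ Set.Icc a b ⊆ U) (hf : ContDiffOn ℝ (⊤ : ℕ∞) f U)
    (hf' : ∀ z ∈ U, derivLast f z ≠ 0) (hS : IsClosed S) (haS : a ∉ S) (hbS : b ∉ S)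
    (N : ℕ) {A : E × ℝ → ℝ} (hA : ContDiffOn ℝ (⊤ : ℕ∞) A U)
    (hA0 : ∀ z ∈ U, z.2 ∉ S → A z = 0) :
    ∃ C, ∀ p ∈ K, ∀ T > 0, ‖∫ r in a..b, expI (T * f (p, r)) * A (p, r)‖ ≤ C / T ^ N := by
  have hmem {p : E} (hp : p ∈ K) : ∀ r ∈ Set.Icc a b, (p, r) ∈ U := fun r hr => hKU ⟨hp, hr⟩
  induction N generalizing A with
  | zero =>
    obtain ⟨C, hC⟩ := (hK.prod isCompact_Icc).exists_bound_of_continuousOn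
      (hA.continuousOn.mono hKU)
    refine ⟨C * |b - a|, fun p hp T _ => ?_⟩
    rw [pow_zero, div_one]
    refine intervalIntegral.norm_integral_le_of_norm_le_const fun r hr => ?_
    rw [Set.uIoc_of_le hab] at hr
    rw [norm_mul, norm_expI, one_mul, Complex.norm_real]
    exact hC (p, r) ⟨hp, Set.Ioc_subset_Icc_self hr⟩
  | succ N ih =>
    have hf's := contDiffOn_derivLast hU hf
    have hB : ContDiffOn ℝ (⊤ : ℕ∞) (fun z => A z / derivLast f z) U := hA.div hf's hf'
    have hB0 : ∀ z ∈ U, z.2 ∉ S → A z / derivLast f z = 0 := fun z hz hzS => by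
      rw [hA0 z hz hzS, zero_div]
    have hB's := contDiffOn_derivLast hU hB
    obtain ⟨C, hC⟩ := ih hB's (derivLast_eq_zero hU hS hB0)
    refine ⟨C, fun p hp T hT => ?_⟩
    have hslice {g : E × ℝ → ℝ} (hg : ContDiffOn ℝ (⊤ : ℕ∞) g U) :
        ContinuousOn (fun r => g (p, r)) (Set.Icc a b) :=
      hg.continuousOn.comp (by fun_prop) (hmem hp)
    have hparts := mul_norm_integral_expI_mul_le (A := fun r => A (p, r)) hab hT.le
      (fun r hr => hasDerivAt_derivLast hU hf (hmem hp r hr)) (hslice hf's)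
      (fun r hr => hasDerivAt_derivLast hU hB (hmem hp r hr)) (hslice hB's)
      (fun r hr => (mul_div_cancel₀ _ (hf' _ (hmem hp r hr))).symm)
      (hB0 _ (hmem hp a ⟨le_rfl, hab⟩) haS) (hB0 _ (hmem hp b ⟨hab, le_rfl⟩) hbS)
    rw [pow_succ, ← div_div, le_div_iff₀ hT, mul_comm]
    exact hparts.trans (hC p hp T hT)

theorem derivLast_add_mul {G : E × ℝ → ℝ} (hG : ContDiffOn ℝ (⊤ : ℕ∞) G (Set.univ ×ˢ Set.Ioi 0))
    (p : E) (s : ℝ) {r : ℝ} (hr : 0 < r) :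
    derivLast (fun z : (E × ℝ) × ℝ => G (z.1.1, z.2) + z.1.2 * z.2) ((p, s), r) =
      derivLast G (p, r) + s := by
  have htilt : DifferentiableAt ℝ (fun z : (E × ℝ) × ℝ => G (z.1.1, z.2) + z.1.2 * z.2)
      ((p, s), r) := by
    have := (hG.contDiffAt (x := (p, r)) (isOpen_univ_prod_Ioi.mem_nhds
      ⟨trivial, hr⟩)).differentiableAt (by simp)
    exact (this.comp ((p, s), r) (f := fun z : (E × ℝ) × ℝ => (z.1.1, z.2)) (by fun_prop)).add
      (by fun_prop)
  have hline := htilt.hasFDerivAt.comp_hasDerivAt r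
    ((hasDerivAt_const r (p, s)).prodMk (hasDerivAt_id r))
  have hsum := (hasDerivAt_derivLast isOpen_univ_prod_Ioi hG (p := p) (r := r)
    ⟨trivial, hr⟩).add ((hasDerivAt_id r).const_mul s)
  rw [mul_one] at hsum
  exact hline.unique hsum

theorem exists_norm_integral_expI_add_mul_le_div_pow {G : E × ℝ → ℝ} {A : ℝ → ℝ} {c : ℝ}
    (ha : 0 < a) (hab : a ≤ b) (hK : IsCompact K)
    (hG : ContDiffOn ℝ (⊤ : ℕ∞) G (Set.univ ×ˢ Set.Ioi 0)) (hc : 0 < c)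
    (hG' : ∀ p ∈ K, ∀ r ∈ Set.Icc a b, c ≤ derivLast G (p, r)) (hA : ContDiff ℝ (⊤ : ℕ∞) A)
    (haA : a ∉ tsupport A) (hbA : b ∉ tsupport A) (N : ℕ) :
    ∃ C, ∀ p ∈ K, ∀ s ∈ Set.Icc (-(c / 2)) (c / 2), ∀ T > 0,
      ‖∫ r in a..b, expI (T * (G (p, r) + s * r)) * A r‖ ≤ C / T ^ N := by
  set V : Set ((E × ℝ) × ℝ) := Set.univ ×ˢ Set.Ioi 0
  have hV : IsOpen V := isOpen_univ_prod_Ioi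
  set ψ : (E × ℝ) × ℝ → ℝ := fun z => G (z.1.1, z.2) + z.1.2 * z.2
  have hψ : ContDiffOn ℝ (⊤ : ℕ∞) ψ V :=
    (hG.comp (ContDiff.contDiffOn (by fun_prop)) fun z hz => ⟨trivial, hz.2⟩).add
      (ContDiff.contDiffOn (by fun_prop))
  have hU : IsOpen (V ∩ derivLast ψ ⁻¹' {0}ᶜ) :=
    (contDiffOn_derivLast hV hψ).continuousOn.isOpen_inter_preimage hV isOpen_compl_singleton
  have hKU : (K ×ˢ Set.Icc (-(c / 2)) (c / 2)) ×ˢ Set.Icc a b ⊆ V ∩ derivLast ψ ⁻¹' {0}ᶜ := by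
    rintro ⟨⟨p, s⟩, r⟩ ⟨⟨hp, hs : -(c / 2) ≤ s ∧ _⟩, hr⟩
    have hr0 : 0 < r := ha.trans_le hr.1
    refine ⟨⟨trivial, hr0⟩, ?_⟩
    rw [Set.mem_preimage, derivLast_add_mul hG p s hr0]
    have : 0 < derivLast G (p, r) + s := by linarith [hG' p hp r hr, hs.1]
    exact this.ne'
  obtain ⟨C, hC⟩ := exists_norm_integral_expI_mul_le_div_pow hab hU (hK.prod isCompact_Icc) hKU
    (hψ.mono Set.inter_subset_left) (fun z hz => hz.2) (isClosed_tsupport A) haA hbA N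
    (A := fun z => A z.2) (ContDiff.contDiffOn (by fun_prop))
    (fun z _ hz => image_eq_zero_of_notMem_tsupport hz)
  exact ⟨C, fun p hp s hs T hT => hC (p, s) ⟨hp, hs⟩ T hT⟩

end DerivLast

/-! ### Kernels with a nondegenerate radial phase -/

namespace IsHalfPowerAmplitude

variable {m : ℕ} {C a b r σ : ℝ} {H : ℝ → ℂ}

theorem nonneg (hH : IsHalfPowerAmplitude m C H) : 0 ≤ C := by
  have := (norm_nonneg _).trans (hH.norm_le 1 one_ne_zero)
  rwa [abs_one, Real.sqrt_one, one_pow, div_one] at this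

theorem norm_comp_mul_le (hH : IsHalfPowerAmplitude m C H) (ha : 0 < a) (har : a ≤ r)
    (hσ : σ ≠ 0) : ‖H (σ * r)‖ ≤ C / √a ^ m / √|σ| ^ m := by
  have hC := hH.nonneg
  have hr : 0 < r := ha.trans_le har
  calc ‖H (σ * r)‖ ≤ C / √|σ * r| ^ m := hH.norm_le _ (mul_ne_zero hσ hr.ne')
    _ = C / √r ^ m / √|σ| ^ m := by
      rw [abs_mul, abs_of_pos hr, Real.sqrt_mul (abs_nonneg σ), mul_pow, div_div, mul_comm]
    _ ≤ _ := by gcongr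

theorem norm_mul_deriv_comp_mul_le (hH : IsHalfPowerAmplitude m C H) (ha : 0 < a) (har : a ≤ r)
    (hσ : σ ≠ 0) : ‖(σ : ℂ) * deriv H (σ * r)‖ ≤ C / (√a ^ m * a) / √|σ| ^ m := by
  have hC := hH.nonneg
  have hr : 0 < r := ha.trans_le har
  have hσ' : 0 < |σ| := abs_pos.2 hσ
  calc ‖(σ : ℂ) * deriv H (σ * r)‖ ≤ |σ| * (C / (√|σ * r| ^ m * |σ * r|)) := by
        rw [norm_mul, Complex.norm_real, Real.norm_eq_abs]
        gcongr
        exact hH.norm_deriv_le _ (mul_ne_zero hσ hr.ne')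
    _ = C / (√r ^ m * r) / √|σ| ^ m := by
      rw [abs_mul, abs_of_pos hr, Real.sqrt_mul hσ'.le, mul_pow]
      field_simp
    _ ≤ _ := by gcongr

theorem hasDerivAt_mul_comp_mul (hH : IsHalfPowerAmplitude m C H) {A : ℝ → ℂ}
    (hA : ContDiff ℝ 1 A) (σ r : ℝ) :
    HasDerivAt (fun r => A r * H (σ * r))
      (deriv A r * H (σ * r) + A r * (σ * deriv H (σ * r))) r := by
  have hcomp := (hH.contDiff.differentiable one_ne_zero (σ * r)).hasDerivAt.scomp r
    (hasDerivAt_const_mul σ)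
  rw [Complex.real_smul] at hcomp
  exact (hA.differentiable one_ne_zero r).hasDerivAt.mul hcomp

theorem exists_norm_integral_expI_mul_le (hH : IsHalfPowerAmplitude m C H) (ha : 0 < a)
    (hab : a ≤ b) {A : ℝ → ℂ} (hA : ContDiff ℝ 1 A) :
    ∃ C', ∀ {φ φ' φ'' : ℝ → ℝ} {μ ε σ : ℝ}, 0 < μ → |ε| = 1 → σ ≠ 0 →
      (∀ r ∈ Set.Icc a b, HasDerivAt φ (φ' r) r) →
      (∀ r ∈ Set.Icc a b, HasDerivAt φ' (φ'' r) r) → ContinuousOn φ'' (Set.Icc a b) →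
      (∀ r ∈ Set.Icc a b, μ ≤ ε * φ'' r) →
      ‖∫ r in a..b, expI (φ r) * (A r * H (σ * r))‖ ≤ C' / (√|σ| ^ m * √μ) := by
  obtain ⟨M, hM⟩ := isCompact_Icc.exists_bound_of_continuousOn (s := Set.Icc a b)
    hA.continuous.continuousOn
  obtain ⟨M', hM'⟩ := isCompact_Icc.exists_bound_of_continuousOn (s := Set.Icc a b)
    (hA.continuous_deriv le_rfl).continuousOn
  set P := C / √a ^ m
  set Q := C / (√a ^ m * a)
  refine ⟨M * P * (1 + 2 * π) + (M' * P + M * Q) * (b - a) / 2,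
    fun {φ φ' φ'' μ ε σ} hμ hε hσ hφ hφ' hφ'' hlow => ?_⟩
  have hHc := hH.contDiff.continuous
  have hH'c := hH.contDiff.continuous_deriv le_rfl
  have hAc := hA.continuous
  have hbound := norm_integral_expI_mul_le_of_le_deriv2 hab hμ hε hφ hφ' hφ'' hlow
    (A := fun r => A r * H (σ * r)) (M := M * (P / √|σ| ^ m))
    (M' := M' * (P / √|σ| ^ m) + M * (Q / √|σ| ^ m))
    (fun r _ => hH.hasDerivAt_mul_comp_mul hA σ r) (by fun_prop)
    (fun r hr => norm_mul_le_of_le (hM r hr) (hH.norm_comp_mul_le ha hr.1 hσ))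
    (fun r hr => norm_add_le_of_le
      (norm_mul_le_of_le (hM' r hr) (hH.norm_comp_mul_le ha hr.1 hσ))
      (norm_mul_le_of_le (hM r hr) (hH.norm_mul_deriv_comp_mul_le ha hr.1 hσ)))
  refine hbound.trans_eq ?_
  rw [← div_div]
  congr 1
  ring

end IsHalfPowerAmplitude

theorem le_div_sqrt_pow_mul_sqrt {C T κ : ℝ} (hC : 0 ≤ C) (hT : 0 < T) (hT1 : T ≤ 1) (hκ : 0 < κ)
    (hκ1 : κ ≤ 1) (n : ℕ) : C ≤ C / (√T ^ n * √κ) := by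
  refine le_div_self hC (by positivity) ?_
  exact mul_le_one₀ (pow_le_one₀ (Real.sqrt_nonneg T) (Real.sqrt_le_one.2 hT1))
    (Real.sqrt_nonneg κ) (Real.sqrt_le_one.2 hκ1)

theorem div_pow_le_div_sqrt_pow_mul_sqrt {C T κ : ℝ} (hC : 0 ≤ C) (hT : 1 ≤ T) (hκ : 0 < κ)
    (hκ1 : κ ≤ 1) (n : ℕ) : C / T ^ n ≤ C / (√T ^ n * √κ) := by
  gcongr
  calc √T ^ n * √κ ≤ T ^ n * 1 := by
        gcongr
        · exact Real.sqrt_le_self_iff.2 (Or.inr hT)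
        · exact Real.sqrt_le_one.2 hκ1
    _ = T ^ n := mul_one _

theorem div_sqrt_pow_mul_sqrt_le {C c T y κ : ℝ} (hC : 0 ≤ C) (hc : 0 < c) (hT : 0 < T)
    (hκ : 0 < κ) (hy : c * T ≤ y) (n : ℕ) :
    C / (√y ^ n * √(T * κ)) ≤ C / √c ^ n / (√T ^ (n + 1) * √κ) := by
  rw [div_div, Real.sqrt_mul hT.le]
  gcongr C / ?_
  calc √c ^ n * (√T ^ (n + 1) * √κ) = √(c * T) ^ n * (√T * √κ) := by
        rw [Real.sqrt_mul hc.le]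
        ring
    _ ≤ √y ^ n * (√T * √κ) := by gcongr

theorem expI_mul_expI_mul (x y s r : ℝ) (n : ℕ) :
    expI x * (expI y * s * r ^ n) = expI (y + x) * (s * r ^ n : ℝ) := by
  rw [expI_add]
  push_cast
  ring

section Kernel

variable {E : Type*} [NormedAddCommGroup E] [NormedSpace ℝ E] {K : Set E} {G : E × ℝ → ℝ}
  {ϱ : ℝ → ℝ} {a b c : ℝ}

theorem exists_norm_integral_radial_le_of_norm_le (n N : ℕ) (ha : 0 < a) (hab : a ≤ b)
    (hK : IsCompact K) (hG : ContDiffOn ℝ (⊤ : ℕ∞) G (Set.univ ×ˢ Set.Ioi 0)) (hc : 0 < c)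
    (hG' : ∀ p ∈ K, ∀ r ∈ Set.Icc a b, c ≤ derivLast G (p, r)) (hϱ : ContDiff ℝ (⊤ : ℕ∞) ϱ)
    (hsupp : ∀ r ∈ tsupport ϱ, 0 ≤ r → r ∈ Set.Ioo a b) :
    ∃ C, ∀ p ∈ K, ∀ T > 0, ∀ Φ : ℝ → ℝ, Continuous Φ → (∀ r > 0, Φ r = T * G (p, r)) →
      ∀ x : Euc (n + 1), ‖x‖ ≤ c / 2 * T →
        ‖∫ ξ : Euc (n + 1), expI ⟪x, ξ⟫ * (expI (Φ ‖ξ‖) * ϱ ‖ξ‖)‖ ≤ C / T ^ N := by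
  have hnot {r : ℝ} (hr : 0 ≤ r) (hr' : r ∉ Set.Ioo a b) : r ∉ tsupport fun r => ϱ r * r ^ n :=
    fun h => hr' (hsupp r (tsupport_mul_subset_left h) hr)
  obtain ⟨C₁, hC₁⟩ := exists_norm_integral_expI_add_mul_le_div_pow ha hab hK hG hc hG'
    (hϱ.mul (contDiff_id.pow n)) (hnot ha.le Set.left_notMem_Ioo)
    (hnot (ha.le.trans hab) Set.right_notMem_Ioo) N
  obtain ⟨C₂, hC₂⟩ := exists_norm_integral_expI_inner_mul_norm_le n
  have hϱc := hϱ.continuous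
  refine ⟨C₂ * C₁, fun p hp T hT Φ hΦc hΦ x hx => ?_⟩
  rw [mul_div_assoc]
  refine hC₂ (F := fun r => expI (Φ r) * ϱ r) ha.le hab (by fun_prop) (fun r hr hr' => ?_) x _
    fun σ hσ => ?_
  · rw [image_eq_zero_of_notMem_tsupport fun h => hr' (hsupp r h hr), Complex.ofReal_zero,
      mul_zero]
  · have hσT : σ / T ∈ Set.Icc (-(c / 2)) (c / 2) := by
      rw [Set.mem_Icc, le_div_iff₀ hT, div_le_iff₀ hT]
      constructor <;> linarith [hσ.1, hσ.2]
    refine (congrArg _ (intervalIntegral.integral_congr fun r hr => ?_)).trans_le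
      (hC₁ p hp _ hσT T hT)
    rw [Set.uIcc_of_le hab] at hr
    have : T * (G (p, r) + σ / T * r) = T * G (p, r) + σ * r := by field_simp
    simp only [this, hΦ r (ha.trans_le hr.1), expI_mul_expI_mul, id]

theorem exists_norm_integral_radial_le_div_sqrt_norm (n : ℕ) (ha : 0 < a) (hab : a ≤ b)
    (hG : ContDiffOn ℝ (⊤ : ℕ∞) G (Set.univ ×ˢ Set.Ioi 0)) (hϱ : ContDiff ℝ (⊤ : ℕ∞) ϱ)
    (hsupp : ∀ r ∈ tsupport ϱ, 0 ≤ r → r ∈ Set.Ioo a b) :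
    ∃ C, ∀ p, ∀ κ > 0, ∀ ε : ℝ, |ε| = 1 →
      (∀ r ∈ Set.Icc a b, κ ≤ ε * derivLast (derivLast G) (p, r)) → ∀ T > 0, ∀ Φ : ℝ → ℝ,
      Continuous Φ → (∀ r > 0, Φ r = T * G (p, r)) → ∀ x : Euc (n + 1), x ≠ 0 →
        ‖∫ ξ : Euc (n + 1), expI ⟪x, ξ⟫ * (expI (Φ ‖ξ‖) * ϱ ‖ξ‖)‖ ≤
          C / (√‖x‖ ^ n * √(T * κ)) := by
  obtain ⟨CH, H, hH, hrep⟩ := exists_integral_expI_inner_mul_norm_eq n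
  obtain ⟨C, hC⟩ := hH.exists_norm_integral_expI_mul_le (A := fun r => (ϱ r * r ^ n : ℝ)) ha hab
    (Complex.ofRealCLM.contDiff.comp ((hϱ.mul (contDiff_id.pow n)).of_le (by simp)))
  have hϱc := hϱ.continuous
  refine ⟨C + C, fun p κ hκ ε hε hcurv T hT Φ hΦc hΦ x hx => ?_⟩
  have hmem : ∀ r ∈ Set.Icc a b, (p, r) ∈ (Set.univ : Set E) ×ˢ Set.Ioi (0 : ℝ) :=
    fun r hr => ⟨trivial, ha.trans_le hr.1⟩
  have hG' := contDiffOn_derivLast isOpen_univ_prod_Ioi hG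
  have hG'' := (contDiffOn_derivLast isOpen_univ_prod_Ioi hG').continuousOn
  have hhalf (σ : ℝ) (hσ : |σ| = ‖x‖) :
      ‖∫ r in a..b, expI (σ * r) * (expI (Φ r) * ϱ r * r ^ n * H (σ * r))‖ ≤
        C / (√‖x‖ ^ n * √(T * κ)) := by
    have hσ0 : σ ≠ 0 := abs_pos.1 (hσ ▸ norm_pos_iff.2 hx)
    have hbound := hC (φ := fun r => T * G (p, r) + σ * r) (mul_pos hT hκ) hε hσ0
      (fun r hr => ((hasDerivAt_derivLast isOpen_univ_prod_Ioi hG (hmem r hr)).const_mul T).add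
        ((hasDerivAt_id r).const_mul σ))
      (fun r hr => ((hasDerivAt_derivLast isOpen_univ_prod_Ioi hG' (hmem r hr)).const_mul
        T).add_const _)
      (continuousOn_const.mul (hG''.comp (by fun_prop) hmem))
      (fun r hr => by
        rw [mul_left_comm]
        exact mul_le_mul_of_nonneg_left (hcurv r hr) hT.le)
    rw [hσ] at hbound
    refine (congrArg _ (intervalIntegral.integral_congr fun r hr => ?_)).trans_le hbound
    rw [Set.uIcc_of_le hab] at hr
    simp only [← mul_assoc, hΦ r (ha.trans_le hr.1), ← expI_mul_expI_mul]
  rw [hrep ha.le hab (F := fun r => expI (Φ r) * ϱ r) (by fun_prop) (fun r hr hr' => by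
    rw [image_eq_zero_of_notMem_tsupport fun h => hr' (hsupp r h hr), Complex.ofReal_zero,
      mul_zero]) x, add_div]
  exact norm_add_le_of_le (hhalf _ (abs_norm x)) (hhalf _ (by rw [abs_neg, abs_norm]))

theorem exists_norm_integral_radial_le (n : ℕ) (ha : 0 < a) (hab : a ≤ b) (hK : IsCompact K)
    (hG : ContDiffOn ℝ (⊤ : ℕ∞) G (Set.univ ×ˢ Set.Ioi 0))
    (hG' : ∀ p ∈ K, ∀ r ∈ Set.Icc a b, 0 < derivLast G (p, r)) (hϱ : ContDiff ℝ (⊤ : ℕ∞) ϱ)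
    (hsupp : ∀ r ∈ tsupport ϱ, 0 ≤ r → r ∈ Set.Ioo a b) :
    ∃ C ≥ 0, ∀ p ∈ K, ∀ κ > 0, κ ≤ 1 → ∀ ε : ℝ, |ε| = 1 →
      (∀ r ∈ Set.Icc a b, κ ≤ ε * derivLast (derivLast G) (p, r)) → ∀ T > 0, ∀ Φ : ℝ → ℝ,
      Continuous Φ → (∀ r > 0, Φ r = T * G (p, r)) → ∀ x : Euc (n + 1),
        ‖∫ ξ : Euc (n + 1), expI ⟪x, ξ⟫ * (expI (Φ ‖ξ‖) * ϱ ‖ξ‖)‖ ≤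
          C / (√T ^ (n + 1) * √κ) := by
  have hsub : K ×ˢ Set.Icc a b ⊆ Set.univ ×ˢ Set.Ioi 0 :=
    fun z hz => ⟨trivial, ha.trans_le hz.2.1⟩
  obtain ⟨c, hc, hcG⟩ := (hK.prod isCompact_Icc).exists_forall_le'
    ((contDiffOn_derivLast isOpen_univ_prod_Ioi hG).continuousOn.mono hsub)
    fun z hz => hG' z.1 hz.1 z.2 hz.2
  obtain ⟨C₁, hC₁⟩ := exists_norm_integral_radial_le_of_norm_le n (n + 1) ha hab hK hG hc
    (fun p hp r hr => hcG (p, r) ⟨hp, hr⟩) hϱ hsupp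
  obtain ⟨C₂, hC₂⟩ := exists_norm_integral_radial_le_div_sqrt_norm n ha hab hG hϱ hsupp
  set C₀ := ∫ ξ : Euc (n + 1), ‖(ϱ ‖ξ‖ : ℂ)‖
  have hC₀ : 0 ≤ C₀ := integral_nonneg fun _ => norm_nonneg _
  refine ⟨C₀ + |C₁| + |C₂| / √(c / 2) ^ n, by positivity,
    fun p hp κ hκ hκ1 ε hε hcurv T hT Φ hΦc hΦ x => ?_⟩
  suffices hsuff : ∃ C ∈ ({C₀, |C₁|, |C₂| / √(c / 2) ^ n} : Set ℝ),
      ‖∫ ξ : Euc (n + 1), expI ⟪x, ξ⟫ * (expI (Φ ‖ξ‖) * ϱ ‖ξ‖)‖ ≤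
        C / (√T ^ (n + 1) * √κ) by
    obtain ⟨C, hC, hle⟩ := hsuff
    refine hle.trans (div_le_div_of_nonneg_right ?_ (by positivity))
    have : 0 ≤ |C₂| / √(c / 2) ^ n := by positivity
    rcases hC with rfl | rfl | rfl <;> linarith [abs_nonneg C₁]
  rcases le_or_gt T 1 with hT1 | hT1
  · refine ⟨C₀, by simp, ((norm_integral_le_integral_norm _).trans_eq ?_).trans
      (le_div_sqrt_pow_mul_sqrt hC₀ hT hT1 hκ hκ1 _)⟩
    simp only [norm_mul, norm_expI, one_mul, C₀]
  rcases le_or_gt ‖x‖ (c / 2 * T) with hx | hx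
  · refine ⟨|C₁|, by simp, (hC₁ p hp T hT Φ hΦc hΦ x hx).trans ?_⟩
    exact (div_le_div_of_nonneg_right (le_abs_self _) (by positivity)).trans
      (div_pow_le_div_sqrt_pow_mul_sqrt (abs_nonneg _) hT1.le hκ hκ1 _)
  · have hx0 : x ≠ 0 := norm_pos_iff.1 (lt_trans (by positivity) hx)
    refine ⟨|C₂| / √(c / 2) ^ n, by simp, (hC₂ p κ hκ ε hε hcurv T hT Φ hΦc hΦ x hx0).trans ?_⟩
    exact (div_le_div_of_nonneg_right (le_abs_self _) (by positivity)).trans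
      (div_sqrt_pow_mul_sqrt_le (abs_nonneg _) (half_pos hc) hT hκ hx.le n)

end Kernel

/-! ### Monotonicity and curvature of the symbol -/

section Tanh

variable (y : ℝ)

theorem one_sub_tanh_sq : 1 - Real.tanh y ^ 2 = 1 / Real.cosh y ^ 2 := by
  have hcosh := (Real.cosh_pos y).ne'
  rw [Real.tanh_eq_sinh_div_cosh]
  field_simp
  linarith [Real.cosh_sq y]

theorem hasDerivAt_tanh : HasDerivAt Real.tanh (1 - Real.tanh y ^ 2) y := by
  have hcosh := (Real.cosh_pos y).ne'
  rw [funext Real.tanh_eq_sinh_div_cosh]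
  refine ((Real.hasDerivAt_sinh y).div (Real.hasDerivAt_cosh y) hcosh).congr_deriv ?_
  field_simp

theorem contDiff_tanh : ContDiff ℝ (⊤ : ℕ∞) Real.tanh := by
  rw [funext Real.tanh_eq_sinh_div_cosh]
  exact Real.contDiff_sinh.div Real.contDiff_cosh fun y => (Real.cosh_pos y).ne'

theorem one_sub_tanh_sq_pos : 0 < 1 - Real.tanh y ^ 2 :=
  sub_pos.2 (Real.tanh_sq_lt_one y)

theorem one_sub_tanh_sq_mul_le :
    (1 - Real.tanh y ^ 2) * (3 + 3 * y ^ 2 + (y ^ 2) ^ 2) ≤ 3 := by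
  have hsum := sum_le_hasSum (Finset.range 3) (fun n _ => by rw [pow_mul]; positivity)
    (Real.hasSum_cosh (2 * y))
  simp only [Finset.sum_range_succ, Finset.sum_range_zero, Nat.factorial,
    Real.cosh_two_mul, Real.sinh_sq] at hsum
  norm_num at hsum
  rw [one_sub_tanh_sq, one_div_mul_eq_div, div_le_iff₀ (by positivity)]
  linarith

variable {y}

theorem tanh_pos_of_pos (hy : 0 < y) : 0 < Real.tanh y := by
  rw [Real.tanh_eq_sinh_div_cosh]
  exact div_pos (Real.sinh_pos_iff.2 hy) (Real.cosh_pos y)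

theorem tanh_le_self_of_nonneg (hy : 0 ≤ y) : Real.tanh y ≤ y := by
  have hderiv (z : ℝ) : HasDerivAt (fun z => z - Real.tanh z) (Real.tanh z ^ 2) z :=
    ((hasDerivAt_id z).sub (hasDerivAt_tanh z)).congr_deriv (sub_sub_cancel _ _)
  have hmono := monotone_of_hasDerivAt_nonneg hderiv (fun z => sq_nonneg _) hy
  simp only [Real.tanh_zero, sub_zero] at hmono
  exact sub_nonneg.1 hmono

theorem mul_one_sub_tanh_sq_le (hy : 0 ≤ y) : y * (1 - Real.tanh y ^ 2) ≤ Real.tanh y := by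
  have hcosh := Real.cosh_pos y
  have hsinh := Real.self_le_sinh_iff.2 (mul_nonneg zero_le_two hy)
  rw [Real.sinh_two_mul] at hsinh
  rw [one_sub_tanh_sq, Real.tanh_eq_sinh_div_cosh, mul_one_div,
    div_le_div_iff₀ (by positivity) hcosh]
  nlinarith

end Tanh

theorem hasDerivAt_deriv_sqrt {f f' : ℝ → ℝ} {f'' y : ℝ} (hf : ∀ y, HasDerivAt f (f' y) y)
    (hf' : HasDerivAt f' f'' y) (hy : 0 < f y) :
    HasDerivAt (deriv fun y => √(f y))
      ((2 * f y * f'' - f' y ^ 2) / (4 * (f y * √(f y)))) y := by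
  have hsqrt : √(f y) ≠ 0 := (Real.sqrt_pos.2 hy).ne'
  have hderiv : (deriv fun y => √(f y)) =ᶠ[nhds y] fun y => f' y / (2 * √(f y)) := by
    filter_upwards [(hf y).continuousAt.eventually_ne hy.ne'] with z hz
    exact ((hf z).sqrt hz).deriv
  refine HasDerivAt.congr_of_eventuallyEq ?_ hderiv
  refine (hf'.div (((hf y).sqrt hy.ne').const_mul 2) (by positivity)).congr_deriv ?_
  have := hy.ne'
  field_simp
  rw [Real.sq_sqrt hy.le]
  ring

section Symbol

/-- The square of the symbol `m_β`. -/
def symbSq (β y : ℝ) : ℝ :=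
  y * (1 + β * y ^ 2) * Real.tanh y

/-- The first derivative of `symbSq β`, in closed form. -/
def symbSqDeriv (β y : ℝ) : ℝ :=
  (1 + 3 * β * y ^ 2) * Real.tanh y + y * (1 + β * y ^ 2) * (1 - Real.tanh y ^ 2)

/-- The second derivative of `symbSq β`, in closed form. -/
def symbSqDeriv2 (β y : ℝ) : ℝ :=
  6 * β * y * Real.tanh y + 2 * (1 + 3 * β * y ^ 2) * (1 - Real.tanh y ^ 2) -
    2 * y * (1 + β * y ^ 2) * Real.tanh y * (1 - Real.tanh y ^ 2)

variable {β y : ℝ}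

theorem hasDerivAt_mul_one_add_mul_sq (β y : ℝ) :
    HasDerivAt (fun y => y * (1 + β * y ^ 2)) (1 + 3 * β * y ^ 2) y := by
  refine ((hasDerivAt_id y).mul (((hasDerivAt_pow 2 y).const_mul β).const_add 1)).congr_deriv ?_
  simp only [id, Nat.cast_ofNat]
  ring

theorem hasDerivAt_symbSq (β y : ℝ) : HasDerivAt (symbSq β) (symbSqDeriv β y) y :=
  (hasDerivAt_mul_one_add_mul_sq β y).mul (hasDerivAt_tanh y)

theorem hasDerivAt_symbSqDeriv (β y : ℝ) :
    HasDerivAt (symbSqDeriv β) (symbSqDeriv2 β y) y := by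
  have hpoly := ((hasDerivAt_pow 2 y).const_mul (3 * β)).const_add 1
  have hsech := ((hasDerivAt_tanh y).pow 2).const_sub 1
  refine ((hpoly.mul (hasDerivAt_tanh y)).add
    ((hasDerivAt_mul_one_add_mul_sq β y).mul hsech)).congr_deriv ?_
  simp only [symbSqDeriv2, Nat.cast_ofNat, Pi.pow_apply]
  ring

theorem symbSq_pos (hβ : 0 ≤ β) (hy : 0 < y) : 0 < symbSq β y := by
  have := tanh_pos_of_pos hy
  rw [symbSq]
  positivity

theorem deriv_mSymb_pos (hβ : 0 ≤ β) (hy : 0 < y) : 0 < deriv (mSymb β) y := by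
  have hpos := symbSq_pos hβ hy
  have htanh := tanh_pos_of_pos hy
  have hsech := one_sub_tanh_sq_pos y
  have hderiv : HasDerivAt (mSymb β) _ y := (hasDerivAt_symbSq β y).sqrt hpos.ne'
  rw [hderiv.deriv, symbSqDeriv]
  positivity

theorem symbSq_curvature_zero (y : ℝ) :
    2 * symbSq 0 y * symbSqDeriv2 0 y - symbSqDeriv 0 y ^ 2 =
      -(4 * (1 - Real.tanh y ^ 2) * (y * Real.tanh y) ^ 2 +
        (Real.tanh y - y * (1 - Real.tanh y ^ 2)) ^ 2) := by
  simp only [symbSq, symbSqDeriv, symbSqDeriv2]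
  ring

theorem symbSq_curvature_one (y : ℝ) :
    2 * symbSq 1 y * symbSqDeriv2 1 y - symbSqDeriv 1 y ^ 2 =
      4 * (1 + y ^ 2) * (y * Real.tanh y) ^ 2 * (1 - (1 + y ^ 2) * (1 - Real.tanh y ^ 2)) +
        4 * (y * Real.tanh y) ^ 2 +
        4 * y ^ 2 * (1 + y ^ 2) * Real.tanh y * (y * (1 - Real.tanh y ^ 2)) -
        ((1 + y ^ 2) * (Real.tanh y - y * (1 - Real.tanh y ^ 2))) ^ 2 := by
  simp only [symbSq, symbSqDeriv, symbSqDeriv2]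
  ring

theorem mul_sq_le_symbSq_curvature_one (hy : 0 < y) :
    (1 - Real.tanh y ^ 2) * (y * Real.tanh y) ^ 2 ≤
      2 * symbSq 1 y * symbSqDeriv2 1 y - symbSqDeriv 1 y ^ 2 := by
  have hT := tanh_pos_of_pos hy
  have hT1 := (Real.tanh_lt_one y).le
  have hTy := tanh_le_self_of_nonneg hy.le
  have hS := one_sub_tanh_sq_pos y
  have hyS := mul_one_sub_tanh_sq_le hy.le
  have hSle := one_sub_tanh_sq_mul_le y
  rw [symbSq_curvature_one]
  set T := Real.tanh y
  set S := 1 - T ^ 2 with hSdef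
  have hmixed : 0 ≤ 4 * y ^ 2 * (1 + y ^ 2) * T * (y * S) := by positivity
  have hgap : 0 ≤ 1 - (1 + y ^ 2) * S := by nlinarith [mul_nonneg hS.le (sq_nonneg (y ^ 2))]
  rcases le_total y 1 with hy1 | hy1
  · have hsq : ((1 + y ^ 2) * (T - y * S)) ^ 2 ≤ (2 * (y * T ^ 2)) ^ 2 := by
      have hy2 : y ^ 2 ≤ 1 := pow_le_one₀ hy.le hy1
      have : T - y * S ≤ y * T ^ 2 := by rw [hSdef]; linarith
      gcongr
      linarith
    nlinarith [mul_nonneg (by positivity : 0 ≤ 4 * (1 + y ^ 2) * (y * T) ^ 2) hgap,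
      mul_nonneg hS.le (sq_nonneg (y * T))]
  · have hsq : ((1 + y ^ 2) * (T - y * S)) ^ 2 ≤ ((1 + y ^ 2) * T) ^ 2 := by
      gcongr
      exact sub_le_self _ (by positivity)
    suffices S * y ^ 2 + (1 + y ^ 2) ^ 2 ≤
        4 * (1 + y ^ 2) * y ^ 2 * (1 - (1 + y ^ 2) * S) + 4 * y ^ 2 by
      nlinarith [mul_le_mul_of_nonneg_right this (sq_nonneg T)]
    have hu : 1 ≤ y ^ 2 := one_le_pow₀ hy1
    generalize y ^ 2 = u at hu hSle
    have hw : 0 < 3 + 3 * u + u ^ 2 := by positivity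
    have hcoef : 0 ≤ u + 4 * (1 + u) ^ 2 * u := by positivity
    refine le_of_mul_le_mul_right ?_ hw
    nlinarith [mul_le_mul_of_nonneg_left hSle hcoef, one_le_pow₀ hu (n := 3),
      one_le_pow₀ hu (n := 4)]

theorem mul_sq_le_symbSq_curvature (hβ : β = 0 ∨ β = 1) (hy : 0 < y) :
    (1 - Real.tanh y ^ 2) * (y * Real.tanh y) ^ 2 ≤
      (2 * β - 1) * (2 * symbSq β y * symbSqDeriv2 β y - symbSqDeriv β y ^ 2) := by
  rcases hβ with rfl | rfl
  · rw [symbSq_curvature_zero]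
    have := one_sub_tanh_sq_pos y
    have : 0 ≤ (1 - Real.tanh y ^ 2) * (y * Real.tanh y) ^ 2 := by positivity
    linarith [sq_nonneg (Real.tanh y - y * (1 - Real.tanh y ^ 2))]
  · linarith [mul_sq_le_symbSq_curvature_one hy]

theorem mul_le_deriv2_mSymb (hβ : β = 0 ∨ β = 1) (hy : 0 < y) :
    (1 - Real.tanh y ^ 2) ^ 2 / (4 * (1 + β * y ^ 2) ^ 2) * y ≤
      (2 * β - 1) * deriv (deriv (mSymb β)) y := by
  have hβ0 : 0 ≤ β := by rcases hβ with rfl | rfl <;> norm_num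
  have hT := tanh_pos_of_pos hy
  have hS := one_sub_tanh_sq_pos y
  have hf := symbSq_pos hβ0 hy
  have hderiv : HasDerivAt (deriv (mSymb β)) _ y :=
    hasDerivAt_deriv_sqrt (hasDerivAt_symbSq β) (hasDerivAt_symbSqDeriv β y) hf
  have hw : 1 ≤ 1 + β * y ^ 2 := le_add_of_nonneg_right (by positivity)
  have hsqrt : √(symbSq β y) ≤ (1 + β * y ^ 2) * y := by
    rw [Real.sqrt_le_left (by positivity), symbSq]
    calc y * (1 + β * y ^ 2) * Real.tanh y ≤ y * (1 + β * y ^ 2) * (y * (1 + β * y ^ 2)) := by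
          gcongr
          exact (tanh_le_self_of_nonneg hy.le).trans (le_mul_of_one_le_right hy.le hw)
      _ = ((1 + β * y ^ 2) * y) ^ 2 := by ring
  have hyS := mul_one_sub_tanh_sq_le hy.le
  rw [hderiv.deriv, ← mul_div_assoc]
  refine le_trans ?_
    (div_le_div_of_nonneg_right (mul_sq_le_symbSq_curvature hβ hy) (by positivity))
  set w := 1 + β * y ^ 2
  set S := 1 - Real.tanh y ^ 2
  set T := Real.tanh y
  calc S ^ 2 / (4 * w ^ 2) * y = S * (y * T) * (y * (y * S)) / (4 * ((y * w * T) * (w * y))) := by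
        field_simp
    _ ≤ S * (y * T) * (y * T) / (4 * ((y * w * T) * √(symbSq β y))) := by
        gcongr
    _ = S * (y * T) ^ 2 / (4 * (symbSq β y * √(symbSq β y))) := by
        rw [mul_assoc S, ← sq]
        rfl

end Symbol

/-! ### Rescaled symbols at low and high frequencies -/

theorem derivLast_eq_of_comp_mul_eq {E : Type*} [NormedAddCommGroup E] [NormedSpace ℝ E]
    {G : E × ℝ → ℝ} (hG : ContDiffOn ℝ (⊤ : ℕ∞) G (Set.univ ×ˢ Set.Ioi 0)) {p : E}
    {m : ℝ → ℝ} {A b : ℝ} (h : ∀ r > 0, m (b * r) = A * G (p, r)) {r : ℝ} (hr : 0 < r) :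
    b * deriv m (b * r) = A * derivLast G (p, r) := by
  have heq : (fun r => m (b * r)) =ᶠ[nhds r] fun r => A * G (p, r) := by
    filter_upwards [isOpen_Ioi.mem_nhds hr] with z hz using h z hz
  rw [← smul_eq_mul b, ← deriv_comp_mul_left, heq.deriv_eq]
  exact ((hasDerivAt_derivLast isOpen_univ_prod_Ioi hG ⟨trivial, hr⟩).const_mul A).deriv

theorem derivLast_derivLast_eq_of_comp_mul_eq {E : Type*} [NormedAddCommGroup E]
    [NormedSpace ℝ E] {G : E × ℝ → ℝ}
    (hG : ContDiffOn ℝ (⊤ : ℕ∞) G (Set.univ ×ˢ Set.Ioi 0)) {p : E}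
    {m : ℝ → ℝ} {A b : ℝ} (h : ∀ r > 0, m (b * r) = A * G (p, r)) {r : ℝ} (hr : 0 < r) :
    b ^ 2 * deriv (deriv m) (b * r) = A * derivLast (derivLast G) (p, r) := by
  rw [← derivLast_eq_of_comp_mul_eq (contDiffOn_derivLast isOpen_univ_prod_Ioi hG)
    (m := fun y => b * deriv m y) (fun r hr => derivLast_eq_of_comp_mul_eq hG h hr) hr,
    deriv_const_mul_field, sq, mul_assoc]

theorem continuous_mSymb (β : ℝ) : Continuous (mSymb β) := by
  have := contDiff_tanh.continuous
  unfold mSymb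
  fun_prop

theorem exists_mul_le_deriv2_mSymb {β : ℝ} (hβ : β = 0 ∨ β = 1) (Y : ℝ) :
    ∃ c > 0, ∀ y ∈ Set.Ioc 0 Y, c * y ≤ (2 * β - 1) * deriv (deriv (mSymb β)) y := by
  have hβ0 : 0 ≤ β := by rcases hβ with rfl | rfl <;> norm_num
  have hw (y : ℝ) : 0 < 1 + β * y ^ 2 := by positivity
  obtain ⟨c, hc, hle⟩ := (isCompact_Icc (a := 0) (b := Y)).exists_forall_le' (a := 0)
    (f := fun y => (1 - Real.tanh y ^ 2) ^ 2 / (4 * (1 + β * y ^ 2) ^ 2))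
    (Continuous.continuousOn <| by
      have := contDiff_tanh.continuous
      fun_prop (disch := exact fun y => (mul_pos four_pos (pow_pos (hw y) 2)).ne'))
    (fun y _ => div_pos (pow_pos (one_sub_tanh_sq_pos y) 2) (mul_pos four_pos (pow_pos (hw y) 2)))
  refine ⟨c, hc, fun y hy => ?_⟩
  exact (mul_le_mul_of_nonneg_right (hle y ⟨hy.1.le, hy.2⟩) hy.1.le).trans
    (mul_le_deriv2_mSymb hβ hy.1)

/-- The function `tanh y / y`, extended by `1` at `0`. -/
def tanhQuot : ℝ → ℝ := dslope Real.tanh 0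

theorem mul_tanhQuot (y : ℝ) : y * tanhQuot y = Real.tanh y := by
  simpa [tanhQuot] using sub_smul_dslope Real.tanh 0 y

theorem contDiff_tanhQuot : ContDiff ℝ (⊤ : ℕ∞) tanhQuot := by
  rw [contDiff_iff_contDiffAt]
  intro y
  rcases eq_or_ne y 0 with rfl | hy
  · have htanh : AnalyticAt ℝ Real.tanh 0 := by
      rw [funext Real.tanh_eq_sinh_div_cosh]
      exact Real.analyticAt_sinh.div Real.analyticAt_cosh (Real.cosh_pos 0).ne'
    obtain ⟨q, hq⟩ := htanh
    exact hq.has_fpower_series_dslope_fslope.analyticAt.contDiffAt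
  · have hquot : tanhQuot =ᶠ[nhds y] fun z => Real.tanh z / z := by
      filter_upwards [isOpen_ne.mem_nhds hy] with z hz
      rw [eq_div_iff hz, mul_comm, mul_tanhQuot]
    exact (contDiff_tanh.contDiffAt.div contDiffAt_id hy).congr_of_eventuallyEq hquot

theorem tanhQuot_zero : tanhQuot 0 = 1 := by
  rw [tanhQuot, dslope_same, (hasDerivAt_tanh 0).deriv, Real.tanh_zero]
  norm_num

theorem tanhQuot_pos (y : ℝ) : 0 < tanhQuot y := by
  rcases lt_trichotomy y 0 with hy | rfl | hy
  · have htanh := tanh_pos_of_pos (neg_pos.2 hy)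
    rw [Real.tanh_neg, ← mul_tanhQuot] at htanh
    exact pos_of_mul_neg_right (neg_pos.1 htanh) hy.le
  · exact tanhQuot_zero ▸ one_pos
  · exact pos_of_mul_pos_right (mul_tanhQuot y ▸ tanh_pos_of_pos hy) hy.le

/-- The rescaled symbol `m_β(l r)/l` as a function of `z = (l, r)`, for low frequencies `l ≤ 1`;
this form is smooth up to `l = 0`. -/
def lowPhase (β : ℝ) (z : ℝ × ℝ) : ℝ :=
  z.2 * √((1 + β * (z.1 * z.2) ^ 2) * tanhQuot (z.1 * z.2))

theorem contDiff_lowPhase {β : ℝ} (hβ : 0 ≤ β) : ContDiff ℝ (⊤ : ℕ∞) (lowPhase β) := by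
  have hquot : ContDiff ℝ (⊤ : ℕ∞) fun z : ℝ × ℝ => tanhQuot (z.1 * z.2) :=
    contDiff_tanhQuot.comp (contDiff_fst.mul contDiff_snd)
  refine contDiff_snd.mul (ContDiff.sqrt (ContDiff.mul (by fun_prop) hquot) fun z => ?_)
  have := tanhQuot_pos (z.1 * z.2)
  positivity

theorem lowPhase_zero_left (β r : ℝ) : lowPhase β (0, r) = r := by
  simp [lowPhase, tanhQuot_zero]

theorem mSymb_mul_eq_mul_lowPhase (β : ℝ) {l r : ℝ} (hl : 0 ≤ l) (hr : 0 ≤ r) :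
    mSymb β (l * r) = l * lowPhase β (l, r) := by
  rw [mSymb, lowPhase, ← mul_tanhQuot, ← mul_assoc l, ← Real.sqrt_sq (mul_nonneg hl hr),
    ← Real.sqrt_mul (sq_nonneg _), Real.sqrt_sq (mul_nonneg hl hr)]
  congr 1
  ring

theorem derivLast_lowPhase_pos {β l r : ℝ} (hβ : 0 ≤ β) (hl : 0 ≤ l) (hr : 0 < r) :
    0 < derivLast (lowPhase β) (l, r) := by
  have hG := (contDiff_lowPhase hβ).contDiffOn (s := Set.univ ×ˢ Set.Ioi 0)
  rcases hl.eq_or_lt with rfl | hl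
  · have hderiv := derivLast_eq_of_comp_mul_eq hG (p := 0) (m := id) (A := 1) (b := 1)
      (fun r _ => by simp only [id, one_mul, lowPhase_zero_left]) hr
    rw [deriv_id, one_mul, one_mul] at hderiv
    exact hderiv ▸ one_pos
  · have hderiv := derivLast_eq_of_comp_mul_eq hG
      (fun r hr => mSymb_mul_eq_mul_lowPhase β hl.le hr.le) hr
    rw [← mul_left_cancel₀ hl.ne' hderiv]
    exact deriv_mSymb_pos hβ (mul_pos hl hr)

theorem derivLast_derivLast_lowPhase {β l r : ℝ} (hβ : 0 ≤ β) (hl : 0 < l) (hr : 0 < r) :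
    derivLast (derivLast (lowPhase β)) (l, r) = l * deriv (deriv (mSymb β)) (l * r) := by
  have hderiv := derivLast_derivLast_eq_of_comp_mul_eq (contDiff_lowPhase hβ).contDiffOn
    (fun r hr => mSymb_mul_eq_mul_lowPhase β hl.le hr.le) hr
  rw [sq, mul_assoc] at hderiv
  exact (mul_left_cancel₀ hl.ne' hderiv).symm

/-- The function `tanh (r/p)` of `z = (p, r)`, for `p > 0`, extended smoothly by `1` to `p ≤ 0`. -/
def tanhInv (z : ℝ × ℝ) : ℝ :=
  (1 - expNegInvGlue (z.1 / (2 * z.2))) / (1 + expNegInvGlue (z.1 / (2 * z.2)))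

theorem expNegInvGlue_lt_one (y : ℝ) : expNegInvGlue y < 1 := by
  unfold expNegInvGlue
  split_ifs with hy
  · exact one_pos
  · exact Real.exp_lt_one_iff.2 (neg_neg_of_pos (inv_pos.2 (not_le.1 hy)))

theorem tanhInv_pos (z : ℝ × ℝ) : 0 < tanhInv z :=
  div_pos (sub_pos.2 (expNegInvGlue_lt_one _))
    (add_pos_of_pos_of_nonneg one_pos (expNegInvGlue.nonneg _))

theorem tanhInv_zero_left (r : ℝ) : tanhInv (0, r) = 1 := by
  simp [tanhInv]

theorem tanhInv_inv_eq_tanh_mul {l r : ℝ} (hl : 0 < l) (hr : 0 < r) :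
    tanhInv (l⁻¹, r) = Real.tanh (l * r) := by
  have hglue : expNegInvGlue (l⁻¹ / (2 * r)) = Real.exp (-(l * r)) / Real.exp (l * r) := by
    rw [expNegInvGlue, if_neg (not_le.2 (by positivity)), ← Real.exp_sub]
    congr 1
    field_simp
    ring
  rw [tanhInv, hglue, Real.tanh_eq_sinh_div_cosh, Real.sinh_eq, Real.cosh_eq]
  field_simp

theorem contDiffOn_tanhInv : ContDiffOn ℝ (⊤ : ℕ∞) tanhInv (Set.univ ×ˢ Set.Ioi 0) := by
  have hquot : ContDiffOn ℝ (⊤ : ℕ∞) (fun z : ℝ × ℝ => z.1 / (2 * z.2)) (Set.univ ×ˢ Set.Ioi 0) :=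
    contDiff_fst.contDiffOn.div (contDiff_const.mul contDiff_snd).contDiffOn
      fun z hz => (mul_pos two_pos hz.2).ne'
  have hglue := (expNegInvGlue.contDiff (n := (⊤ : ℕ∞))).comp_contDiffOn hquot
  exact (contDiffOn_const.sub hglue).div (contDiffOn_const.add hglue) fun z _ =>
    (add_pos_of_pos_of_nonneg one_pos (expNegInvGlue.nonneg _)).ne'

/-- The rescaled symbol `m_β(r/p) √(p(1-β+βp²))` as a function of `z = (p, r)`, for high
frequencies `1/p ≥ 1`; this form is smooth up to `p = 0`. -/
def highPhase (β : ℝ) (z : ℝ × ℝ) : ℝ :=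
  √(z.2 * (1 - β + β * (z.1 ^ 2 + z.2 ^ 2)) * tanhInv z)

theorem one_sub_add_mul_pos {β u : ℝ} (hβ : β = 0 ∨ β = 1) (hu : 0 < u) : 0 < 1 - β + β * u := by
  rcases hβ with rfl | rfl
  · norm_num
  · linarith

theorem contDiffOn_highPhase {β : ℝ} (hβ : β = 0 ∨ β = 1) :
    ContDiffOn ℝ (⊤ : ℕ∞) (highPhase β) (Set.univ ×ˢ Set.Ioi 0) := by
  refine ContDiffOn.sqrt (ContDiffOn.mul (ContDiff.contDiffOn (by fun_prop))
    contDiffOn_tanhInv) fun z hz => ?_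
  have hr : 0 < z.2 := hz.2
  exact (mul_pos (mul_pos hr (one_sub_add_mul_pos hβ (by positivity))) (tanhInv_pos z)).ne'

theorem highPhase_zero_left {β r : ℝ} (hβ : β = 0 ∨ β = 1) (hr : 0 ≤ r) :
    highPhase β (0, r) = r ^ (β + 1 / 2) := by
  rw [highPhase, tanhInv_zero_left, Real.sqrt_eq_rpow]
  rcases hβ with rfl | rfl
  · norm_num
  · convert (Real.rpow_natCast_mul hr 3 (1 / 2)).symm using 2
    · ring
    · norm_num

theorem mSymb_mul_eq_mul_highPhase {β l r : ℝ} (hβ : β = 0 ∨ β = 1) (hl : 0 < l) (hr : 0 < r) :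
    mSymb β (l * r) = √(l * (1 - β + β * l ^ 2)) * highPhase β (l⁻¹, r) := by
  have hw := one_sub_add_mul_pos hβ (pow_pos hl 2)
  rw [mSymb, highPhase, ← Real.sqrt_mul (by positivity), tanhInv_inv_eq_tanh_mul hl hr]
  congr 1
  rcases hβ with rfl | rfl
  · ring
  · field_simp
    ring

theorem derivLast_highPhase_pos {β p r : ℝ} (hβ : β = 0 ∨ β = 1) (hp : 0 ≤ p) (hr : 0 < r) :
    0 < derivLast (highPhase β) (p, r) := by
  have hβ0 : 0 ≤ β := by rcases hβ with rfl | rfl <;> norm_num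
  have hG := contDiffOn_highPhase hβ
  rcases hp.eq_or_lt with rfl | hp
  · have hderiv := derivLast_eq_of_comp_mul_eq hG (p := 0) (m := (· ^ (β + 1 / 2)))
      (A := 1) (b := 1) (fun r hr => by simp only [one_mul, highPhase_zero_left hβ hr.le]) hr
    simp only [one_mul, Real.deriv_rpow_const] at hderiv
    rw [← hderiv]
    positivity
  · have hderiv := derivLast_eq_of_comp_mul_eq hG
      (fun r hr => mSymb_mul_eq_mul_highPhase hβ (inv_pos.2 hp) hr) hr
    rw [inv_inv] at hderiv
    refine pos_of_mul_pos_right (lt_of_lt_of_eq ?_ hderiv) (Real.sqrt_nonneg _)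
    exact mul_pos (inv_pos.2 hp) (deriv_mSymb_pos hβ0 (by positivity))

theorem derivLast_derivLast_highPhase_pos {β p r : ℝ} (hβ : β = 0 ∨ β = 1) (hp : 0 ≤ p)
    (hr : 0 < r) : 0 < (2 * β - 1) * derivLast (derivLast (highPhase β)) (p, r) := by
  have hβ0 : 0 ≤ β := by rcases hβ with rfl | rfl <;> norm_num
  have hG := contDiffOn_highPhase hβ
  rcases hp.eq_or_lt with rfl | hp
  · have hderiv := derivLast_derivLast_eq_of_comp_mul_eq hG (p := 0)
      (m := (· ^ (β + 1 / 2))) (A := 1) (b := 1)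
      (fun r hr => by simp only [one_mul, highPhase_zero_left hβ hr.le]) hr
    simp only [one_mul, one_pow, Real.deriv_rpow_const', deriv_const_mul_field] at hderiv
    rw [← hderiv]
    have hcoef : 0 < (2 * β - 1) * ((β + 1 / 2) * (β + 1 / 2 - 1)) := by
      rcases hβ with rfl | rfl <;> norm_num
    linarith [mul_pos hcoef (Real.rpow_pos_of_pos hr (β + 1 / 2 - 1 - 1))]
  · have hderiv := derivLast_derivLast_eq_of_comp_mul_eq hG
      (fun r hr => mSymb_mul_eq_mul_highPhase hβ (inv_pos.2 hp) hr) hr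
    rw [inv_inv] at hderiv
    have hcurv := mul_le_deriv2_mSymb hβ (mul_pos (inv_pos.2 hp) hr)
    have hsech := one_sub_tanh_sq_pos (p⁻¹ * r)
    refine pos_of_mul_pos_right (a := √(p⁻¹ * (1 - β + β * p⁻¹ ^ 2))) ?_ (Real.sqrt_nonneg _)
    rw [mul_left_comm, ← hderiv, mul_left_comm]
    exact mul_pos (by positivity) (lt_of_lt_of_le (by positivity) hcurv)

section Kernel

variable {β a b : ℝ} {ϱ : ℝ → ℝ}

theorem exists_norm_integral_mSymb_low_le (hβ : β = 0 ∨ β = 1) (n : ℕ) (ha : 0 < a) (hab : a ≤ b)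
    (hϱ : ContDiff ℝ (⊤ : ℕ∞) ϱ) (hsupp : ∀ r ∈ tsupport ϱ, 0 ≤ r → r ∈ Set.Ioo a b) :
    ∃ C ≥ 0, ∀ l > 0, l ≤ 1 → ∀ t > 0, ∀ x : Euc (n + 1),
      ‖∫ ξ : Euc (n + 1), expI ⟪x, ξ⟫ * (expI (t * mSymb β (l * ‖ξ‖)) * ϱ ‖ξ‖)‖ ≤
        C / (√(t * l) ^ (n + 1) * l) := by
  have hβ0 : 0 ≤ β := by rcases hβ with rfl | rfl <;> norm_num
  have hε : |2 * β - 1| = 1 := by rcases hβ with rfl | rfl <;> norm_num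
  obtain ⟨c, hc, hcurv⟩ := exists_mul_le_deriv2_mSymb hβ b
  obtain ⟨C, hC, hle⟩ := exists_norm_integral_radial_le n ha hab (isCompact_Icc (a := 0) (b := 1))
    (contDiff_lowPhase hβ0).contDiffOn
    (fun l hl r hr => derivLast_lowPhase_pos hβ0 hl.1 (ha.trans_le hr.1)) hϱ hsupp
  set κ := min (c * a) 1
  have hκ : 0 < κ := by positivity
  refine ⟨C / √κ, by positivity, fun l hl hl1 t ht x => ?_⟩
  have hκl (r : ℝ) (hr : r ∈ Set.Icc a b) :
      κ * l ^ 2 ≤ (2 * β - 1) * derivLast (derivLast (lowPhase β)) (l, r) := by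
    have hr0 := ha.trans_le hr.1
    rw [derivLast_derivLast_lowPhase hβ0 hl hr0, mul_left_comm]
    calc κ * l ^ 2 ≤ c * r * l ^ 2 := by
          gcongr
          exact (min_le_left _ _).trans (mul_le_mul_of_nonneg_left hr.1 hc.le)
      _ = l * (c * (l * r)) := by ring
      _ ≤ _ := mul_le_mul_of_nonneg_left (hcurv (l * r) ⟨by positivity,
          (mul_le_of_le_one_left hr0.le hl1).trans hr.2⟩) hl.le
  have hκ1 : κ * l ^ 2 ≤ 1 := mul_le_one₀ (min_le_right _ _) (sq_nonneg l) (pow_le_one₀ hl.le hl1)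
  have hcont := continuous_mSymb β
  refine (hle l ⟨hl.le, hl1⟩ (κ * l ^ 2) (by positivity) hκ1 _ hε hκl (t * l) (by positivity)
    (fun r => t * mSymb β (l * r)) (by fun_prop)
    (fun r hr => by rw [mSymb_mul_eq_mul_lowPhase β hl.le hr.le, mul_assoc]) x).trans_eq ?_
  rw [Real.sqrt_mul hκ.le, Real.sqrt_sq hl.le, div_div]
  congr 1
  ring

theorem exists_norm_integral_mSymb_high_le (hβ : β = 0 ∨ β = 1) (n : ℕ) (ha : 0 < a)
    (hab : a ≤ b) (hϱ : ContDiff ℝ (⊤ : ℕ∞) ϱ)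
    (hsupp : ∀ r ∈ tsupport ϱ, 0 ≤ r → r ∈ Set.Ioo a b) :
    ∃ C ≥ 0, ∀ l ≥ 1, ∀ t > 0, ∀ x : Euc (n + 1),
      ‖∫ ξ : Euc (n + 1), expI ⟪x, ξ⟫ * (expI (t * mSymb β (l * ‖ξ‖)) * ϱ ‖ξ‖)‖ ≤
        C / √(t * √(l * (1 - β + β * l ^ 2))) ^ (n + 1) := by
  have hε : |2 * β - 1| = 1 := by rcases hβ with rfl | rfl <;> norm_num
  have hG := contDiffOn_highPhase hβ
  have hK := isCompact_Icc (a := (0 : ℝ)) (b := 1)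
  have hG'' := contDiffOn_derivLast isOpen_univ_prod_Ioi
    (contDiffOn_derivLast isOpen_univ_prod_Ioi hG)
  obtain ⟨c, hc, hcurv⟩ := (hK.prod (isCompact_Icc (a := a) (b := b))).exists_forall_le'
    (continuousOn_const.mul (hG''.continuousOn.mono fun z hz => ⟨trivial, ha.trans_le hz.2.1⟩))
    fun z hz => derivLast_derivLast_highPhase_pos hβ hz.1.1 (ha.trans_le hz.2.1)
  obtain ⟨C, hC, hle⟩ := exists_norm_integral_radial_le n ha hab hK hG
    (fun p hp r hr => derivLast_highPhase_pos hβ hp.1 (ha.trans_le hr.1)) hϱ hsupp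
  refine ⟨C / √(min c 1), by positivity, fun l hl t ht x => ?_⟩
  have hl0 : 0 < l := one_pos.trans_le hl
  have hp : l⁻¹ ∈ Set.Icc (0 : ℝ) 1 := ⟨by positivity, inv_le_one_of_one_le₀ hl⟩
  have hw := one_sub_add_mul_pos hβ (pow_pos hl0 2)
  have hcont := continuous_mSymb β
  refine (hle _ hp (min c 1) (by positivity) (min_le_right _ _) _ hε
    (fun r hr => (min_le_left _ _).trans (hcurv (l⁻¹, r) ⟨hp, hr⟩))
    (t * √(l * (1 - β + β * l ^ 2))) (by positivity) (fun r => t * mSymb β (l * r)) (by fun_prop)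
    (fun r hr => by rw [mSymb_mul_eq_mul_highPhase hβ hl0 hr, mul_assoc]) x).trans_eq ?_
  rw [div_div, mul_comm]

end Kernel

/-! ### Comparison with the factor `c_{β,d}(λ)` -/

section Factor

variable {β l t : ℝ}

theorem le_jap (x : ℝ) : x ≤ jap x :=
  Real.le_sqrt_of_sq_le (by linarith)

theorem one_le_jap (x : ℝ) : 1 ≤ jap x :=
  Real.one_le_sqrt.2 (by linarith [sq_nonneg x])

theorem jap_sqrt_mul_rpow (hβ : 0 ≤ β) (l s : ℝ) :
    jap (√β * l) ^ s = (1 + β * l ^ 2) ^ (s / 2) := by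
  rw [jap, mul_pow, Real.sq_sqrt hβ, Real.sqrt_eq_rpow, ← Real.rpow_mul (by positivity)]
  congr 1
  ring

theorem cFactor_nonneg (d : ℕ) (hl : 0 ≤ l) : 0 ≤ cFactor β d l := by
  have hjap (x : ℝ) : 0 ≤ jap x := zero_le_one.trans (one_le_jap x)
  exact mul_nonneg (mul_nonneg (Real.rpow_nonneg hl _) (Real.rpow_nonneg (hjap _) _))
    (Real.rpow_nonneg (hjap _) _)

theorem rpow_mul_rpow_mul_rpow_le_cFactor (hβ : 0 ≤ β) (d : ℕ) (hl : 0 < l) {u v : ℝ}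
    (hu : 1 + β * l ^ 2 ≤ 2 * u) (hv : 0 ≤ v) (hvl : v ≤ jap l) :
    l ^ ((d : ℝ) / 2 - 1) * u ^ (-(d : ℝ) / 4) * v ^ ((d : ℝ) / 4 + 1) ≤
      2 ^ ((d : ℝ) / 4) * cFactor β d l := by
  have hjap : 0 < 1 + β * l ^ 2 := by positivity
  have hu0 : 0 ≤ u := by linarith
  have hle : (2 * u) ^ (-(d : ℝ) / 4) ≤ (1 + β * l ^ 2) ^ (-(d : ℝ) / 4) :=
    Real.rpow_le_rpow_of_nonpos hjap hu (by linarith [(Nat.cast_nonneg d : (0 : ℝ) ≤ d)])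
  have hsplit : u ^ (-(d : ℝ) / 4) = 2 ^ ((d : ℝ) / 4) * (2 * u) ^ (-(d : ℝ) / 4) := by
    rw [Real.mul_rpow two_pos.le hu0, ← mul_assoc, ← Real.rpow_add two_pos, neg_div,
      add_neg_cancel, Real.rpow_zero, one_mul]
  calc l ^ ((d : ℝ) / 2 - 1) * u ^ (-(d : ℝ) / 4) * v ^ ((d : ℝ) / 4 + 1)
      ≤ l ^ ((d : ℝ) / 2 - 1) * (2 ^ ((d : ℝ) / 4) * (1 + β * l ^ 2) ^ (-(d : ℝ) / 4)) *
          jap l ^ ((d : ℝ) / 4 + 1) := by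
        rw [hsplit]
        gcongr
    _ = 2 ^ ((d : ℝ) / 4) * cFactor β d l := by
        rw [cFactor, jap_sqrt_mul_rpow hβ, div_div, show (2 : ℝ) * 2 = 4 by norm_num]
        ring

theorem sqrt_pow_eq_rpow {x : ℝ} (hx : 0 ≤ x) (d : ℕ) : √x ^ d = x ^ ((d : ℝ) / 2) := by
  rw [Real.sqrt_eq_rpow, ← Real.rpow_mul_natCast hx, one_div_mul_eq_div]

theorem pow_mul_div_low_le (hβ : β = 0 ∨ β = 1) (d : ℕ) {C : ℝ} (hC : 0 ≤ C) (hl : 0 < l)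
    (hl1 : l ≤ 1) (ht : 0 < t) :
    l ^ d * (C / (√(t * l) ^ d * l)) ≤
      C * 2 ^ ((d : ℝ) / 4) * cFactor β d l * t ^ (-(d : ℝ) / 2) := by
  have hu : 1 + β * l ^ 2 ≤ 2 * 1 := by
    rcases hβ with rfl | rfl
    · norm_num
    · linarith [pow_le_one₀ hl.le hl1 (n := 2)]
  have hβ0 : 0 ≤ β := by rcases hβ with rfl | rfl <;> norm_num
  have hfactor := rpow_mul_rpow_mul_rpow_le_cFactor hβ0 d hl hu zero_le_one (one_le_jap l)
  rw [Real.one_rpow, Real.one_rpow, mul_one, mul_one] at hfactor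
  calc l ^ d * (C / (√(t * l) ^ d * l))
      = C * l ^ ((d : ℝ) / 2 - 1) * t ^ (-(d : ℝ) / 2) := by
        rw [Real.sqrt_mul ht.le, mul_pow, sqrt_pow_eq_rpow ht.le, neg_div, Real.rpow_neg ht.le,
          Real.rpow_sub_one hl.ne', ← sqrt_pow_eq_rpow hl.le]
        nth_rw 1 [← Real.sq_sqrt hl.le]
        field_simp
        ring
    _ ≤ C * (2 ^ ((d : ℝ) / 4) * cFactor β d l) * t ^ (-(d : ℝ) / 2) := by gcongr
    _ = _ := by ring

theorem pow_mul_div_high_le (hβ : β = 0 ∨ β = 1) (d : ℕ) {C : ℝ} (hC : 0 ≤ C) (hl : 1 ≤ l)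
    (ht : 0 < t) :
    l ^ d * (C / √(t * √(l * (1 - β + β * l ^ 2))) ^ d) ≤
      C * 2 ^ ((d : ℝ) / 4) * cFactor β d l * t ^ (-(d : ℝ) / 2) := by
  have hl0 : 0 < l := one_pos.trans_le hl
  have hw := one_sub_add_mul_pos hβ (pow_pos hl0 2)
  have hu : 1 + β * l ^ 2 ≤ 2 * (1 - β + β * l ^ 2) := by
    rcases hβ with rfl | rfl
    · norm_num
    · linarith [one_le_pow₀ hl (n := 2)]
  have hβ0 : 0 ≤ β := by rcases hβ with rfl | rfl <;> norm_num
  have hfactor := rpow_mul_rpow_mul_rpow_le_cFactor hβ0 d hl0 hu hl0.le (le_jap l)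
  set w := 1 - β + β * l ^ 2
  calc l ^ d * (C / √(t * √(l * w)) ^ d)
      = C * (l ^ ((d : ℝ) - d / 4) * w ^ (-(d : ℝ) / 4)) * t ^ (-(d : ℝ) / 2) := by
        rw [sqrt_pow_eq_rpow (by positivity), Real.mul_rpow ht.le (Real.sqrt_nonneg _),
          Real.sqrt_eq_rpow, ← Real.rpow_mul (by positivity), Real.mul_rpow hl0.le hw.le,
          neg_div, neg_div, Real.rpow_neg ht.le, Real.rpow_neg hw.le, Real.rpow_sub hl0,
          Real.rpow_natCast, show 1 / 2 * ((d : ℝ) / 2) = d / 4 by ring]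
        field_simp
    _ = C * (l ^ ((d : ℝ) / 2 - 1) * w ^ (-(d : ℝ) / 4) * l ^ ((d : ℝ) / 4 + 1)) *
          t ^ (-(d : ℝ) / 2) := by
        rw [mul_right_comm (l ^ ((d : ℝ) / 2 - 1)), ← Real.rpow_add hl0]
        congr 4
        ring
    _ ≤ C * (2 ^ ((d : ℝ) / 4) * cFactor β d l) * t ^ (-(d : ℝ) / 2) := by gcongr
    _ = _ := by ring

end Factor

/-! ### The kernel bound -/

section Cutoff

variable {χ : ℝ → ℝ}

theorem contDiff_rho (hχ : IsCutoff χ) : ContDiff ℝ (⊤ : ℕ∞) (rho χ) :=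
  hχ.1.sub (hχ.1.comp (contDiff_const.mul contDiff_id))

theorem hasCompactSupport_rho (hχ : IsCutoff χ) : HasCompactSupport (rho χ) :=
  hχ.2.1.sub (hχ.2.1.comp_homeomorph (Homeomorph.mulLeft₀ (2 : ℝ) two_ne_zero))

theorem zero_notMem_tsupport_rho (hχ : IsCutoff χ) : 0 ∉ tsupport (rho χ) := by
  rw [notMem_tsupport_iff_eventuallyEq]
  filter_upwards [Icc_mem_nhds (by norm_num : (-1 / 2 : ℝ) < 0) (by norm_num : (0 : ℝ) < 1 / 2)]
    with s hs
  obtain ⟨-, -, -, hone, -⟩ := hχ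
  rw [rho, hone s ⟨by linarith [hs.1], by linarith [hs.2]⟩,
    hone (2 * s) ⟨by linarith [hs.1], by linarith [hs.2]⟩, sub_self, Pi.zero_apply]

end Cutoff

theorem exists_tsupport_nonneg_subset_Ioo {ϱ : ℝ → ℝ} (hϱ : HasCompactSupport ϱ)
    (h0 : 0 ∉ tsupport ϱ) :
    ∃ a > 0, ∃ b ≥ a, ∀ r ∈ tsupport ϱ, 0 ≤ r → r ∈ Set.Ioo a b := by
  obtain ⟨a, ha, hle⟩ := (IsCompact.inter_right hϱ isClosed_Ici).exists_forall_le' (a := 0)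
    continuousOn_id fun r (hr : r ∈ tsupport ϱ ∩ Set.Ici 0) =>
      lt_of_le_of_ne hr.2 (by rintro rfl; exact h0 hr.1)
  obtain ⟨b, hb⟩ := IsCompact.bddAbove hϱ
  refine ⟨a / 2, half_pos ha, max (a / 2) (b + 1), le_max_left _ _, fun r hr hr0 => ⟨?_, ?_⟩⟩
  · exact (half_lt_self ha).trans_le (hle r ⟨hr, hr0⟩)
  · exact ((hb hr).trans_lt (lt_add_one b)).trans_le (le_max_right _ _)

theorem oscillatory_kernel_bound_general {β : ℝ} (hβ : β = 0 ∨ β = 1) {d : ℕ} (hd : 1 ≤ d)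
    {ϱ : ℝ → ℝ} (hϱ : ContDiff ℝ (⊤ : ℕ∞) ϱ) (hϱc : HasCompactSupport ϱ) (h0 : 0 ∉ tsupport ϱ) :
    ∃ C > 0, ∀ l > 0, ∀ t > 0, ∀ x : Euc d,
      ‖((l ^ d : ℝ) : ℂ) *
          ∫ ξ : Euc d, Complex.exp (Complex.I *
              ((l * ⟪x, ξ⟫ + t * mSymb β (l * ‖ξ‖) : ℝ) : ℂ)) * (ϱ ‖ξ‖ : ℂ)‖ ≤
        C * cFactor β d l * t ^ (-(d : ℝ) / 2) := by
  obtain ⟨n, rfl⟩ := Nat.exists_eq_add_of_le' hd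
  obtain ⟨a, ha, b, hab, hsupp⟩ := exists_tsupport_nonneg_subset_Ioo hϱc h0
  obtain ⟨C₁, hC₁, hlow⟩ := exists_norm_integral_mSymb_low_le hβ n ha hab hϱ hsupp
  obtain ⟨C₂, hC₂, hhigh⟩ := exists_norm_integral_mSymb_high_le hβ n ha hab hϱ hsupp
  refine ⟨max (max C₁ C₂) 1 * 2 ^ (((n + 1 : ℕ) : ℝ) / 4), by positivity, fun l hl t ht x => ?_⟩
  have hfactor := cFactor_nonneg (β := β) (n + 1) hl.le
  have hphase (ξ : Euc (n + 1)) :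
      Complex.exp (Complex.I * ((l * ⟪x, ξ⟫ + t * mSymb β (l * ‖ξ‖) : ℝ) : ℂ)) * (ϱ ‖ξ‖ : ℂ) =
        expI ⟪l • x, ξ⟫ * (expI (t * mSymb β (l * ‖ξ‖)) * ϱ ‖ξ‖) := by
    rw [← mul_assoc, ← expI_add, real_inner_smul_left]
    rfl
  simp only [hphase]
  rw [norm_mul, Complex.norm_of_nonneg (by positivity)]
  rcases le_total l 1 with hl1 | hl1
  · refine (mul_le_mul_of_nonneg_left (hlow l hl hl1 t ht (l • x)) (by positivity)).trans
      ((pow_mul_div_low_le hβ (n + 1) hC₁ hl hl1 ht).trans ?_)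
    gcongr
    exact (le_max_left _ _).trans (le_max_left _ _)
  · refine (mul_le_mul_of_nonneg_left (hhigh l hl1 t ht (l • x)) (by positivity)).trans
      ((pow_mul_div_high_le hβ (n + 1) hC₂ hl1 ht).trans ?_)
    gcongr
    exact (le_max_right _ _).trans (le_max_left _ _)

/-- The bound `sup_x |I_λ(x,t)| ≲ c_{β,d}(λ) t^{-d/2}` for the oscillatory integral
`I_λ(x,t) = λ^d ∫ e^{iλx·ξ + it m_β(λ|ξ|)} ρ(|ξ|) dξ`, uniformly in `λ = 2^n`, `x` and
`t > 0`. -/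
theorem oscillatory_kernel_bound
    (β : ℝ) (hβ : β = 0 ∨ β = 1) (d : ℕ) (hd : 1 ≤ d)
    (χ : ℝ → ℝ) (hχ : IsCutoff χ) :
    ∃ C > 0, ∀ (n : ℤ) (t : ℝ), 0 < t → ∀ x : Euc d,
      ‖((((2 : ℝ) ^ n) ^ d : ℝ) : ℂ) *
          ∫ ξ : Euc d, Complex.exp (Complex.I *
              (((2 : ℝ) ^ n * ⟪x, ξ⟫ + t * mSymb β ((2 : ℝ) ^ n * ‖ξ‖) : ℝ) : ℂ)) *
            (rho χ ‖ξ‖ : ℂ)‖ ≤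
        C * cFactor β d ((2 : ℝ) ^ n) * t ^ (-(d : ℝ) / 2) := by
  obtain ⟨C, hC, hle⟩ := oscillatory_kernel_bound_general hβ hd (contDiff_rho hχ)
    (hasCompactSupport_rho hχ) (zero_notMem_tsupport_rho hχ)
  exact ⟨C, hC, fun n t ht x => hle _ (by positivity) t ht x⟩
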